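/- arXiv:1301.5799 — 3 statements merged into one kernel-verified Lean document; each statement's English description precedes it below -/
import Mathlib

section
/- Let K be a compact Hausdorff space and F ⊂ K a closed metrizable subset. Let L = (K \ F) ∪ {F} be endowed with the quotient topology induced by the map Q : K → L defined by Q(x) = x for x ∈ K \ F and Q(x) = F for x ∈ F (i.e., L is the quotient of K obtained by collapsing F to a single point). If D is induced by an r-skeleton in L and Q⁻¹(D) is dense in K, then Q⁻¹(D) is induced by an r-skeleton in K. -/
/-!
The space `L = K / F` is Hausdorff, and since `F` is compact metrizable there is a continuous
`h : K → ℕ → ℝ` that is injective on `F` (distances to a dense sequence, extended by Tietze).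
Hence `x ↦ (Q x, h x)` is an embedding of `K` into `L × (ℕ → ℝ)`. The skeleton `(r s)` of `L`
yields the skeleton `(r s × id)` of this product (`RetractionalSkeleton.prodId`), which induces
`D × (ℕ → ℝ)`, a set whose trace on `K` is `Q ⁻¹' D`.

It remains to see that, for a compact subspace `K` of a Hausdorff space `X` with a skeleton inducing
`D`, density of `D ∩ K` in `K` makes `D ∩ K` induced by a skeleton in `K`
(`RetractionalSkeleton.isInduced_preimage`). The retractions with `r s [K] ⊆ K` restrict to `K`, and
the set of such `s` is clearly closed under suprema of increasing sequences. It is cofinal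
(`RetractionalSkeleton.exists_stable_ge`) by a closing-off argument: alternately pick countable
`A n ⊆ D ∩ K` with `r (s n) [A n]` dense in `r (s n) [K]`, and `s (n + 1) ≥ s n` such that
`r (s (n + 1))` fixes `A n` pointwise. For `s = sup s n` one gets
`r s [K] = closure (⋃ n, A n) ⊆ K`.
-/

open Filter Topology TopologicalSpace Set

universe u v

/-- A retractional skeleton in a topological space `K`: a family `r s : C(K, K)` of continuous
retractions indexed by an up-directed (nonempty) partially ordered set `Γ` such that
(i) each `r s` has metrizable range and the net `(r s x)` converges to `x`;
(ii) `s ≤ t` implies `r s ∘ r t = r t ∘ r s = r s`;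
(iii) each strictly increasing sequence has a supremum `t` and `r t x = lim_n r (f n) x`. -/
structure RetractionalSkeleton (K : Type u) [TopologicalSpace K] : Type (u + 1) where
  Γ : Type u
  [po : PartialOrder Γ]
  [ne : Nonempty Γ]
  directed : ∀ s t : Γ, ∃ w, s ≤ w ∧ t ≤ w
  r : Γ → C(K, K)
  isRetraction : ∀ s, ∀ x : K, r s (r s x) = r s x
  metrizable : ∀ s, MetrizableSpace ↥(Set.range (r s))
  tendsto_id : ∀ x : K, Tendsto (fun s => r s x) atTop (𝓝 x)
  comp_eq_of_le : ∀ s t : Γ, s ≤ t → ∀ x : K, r s (r t x) = r s x ∧ r t (r s x) = r s x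
  sup_seq : ∀ f : ℕ → Γ, StrictMono f → ∃ t : Γ, IsLUB (Set.range f) t ∧
    ∀ x : K, Tendsto (fun n => r (f n) x) atTop (𝓝 (r t x))

/-- The set `D(𝔰) = ⋃ s, r s [K]` induced by a retractional skeleton. -/
def RetractionalSkeleton.inducedSet {K : Type u} [TopologicalSpace K]
    (𝔰 : RetractionalSkeleton K) : Set K := ⋃ s, Set.range (𝔰.r s)

/-- `D` is induced by an r-skeleton in `K`. -/
def IsInducedByRSkeleton {K : Type u} [TopologicalSpace K] (D : Set K) : Prop :=
  ∃ 𝔰 : RetractionalSkeleton K, 𝔰.inducedSet = D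

/-- `K` has a retractional skeleton. -/
def HasRetractionalSkeleton (K : Type u) [TopologicalSpace K] : Prop :=
  Nonempty (RetractionalSkeleton K)

/-- The equivalence relation on `K` identifying all points of `F` (and nothing else). -/
def collapseSetoid {K : Type u} (F : Set K) : Setoid K where
  r x y := x = y ∨ (x ∈ F ∧ y ∈ F)
  iseqv := by
    constructor
    · exact fun x => Or.inl rfl
    · rintro x y (rfl | ⟨h1, h2⟩)
      · exact Or.inl rfl
      · exact Or.inr ⟨h2, h1⟩
    · rintro x y z (rfl | ⟨h1, h2⟩) (rfl | ⟨h3, h4⟩)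
      · exact Or.inl rfl
      · exact Or.inr ⟨h3, h4⟩
      · exact Or.inr ⟨h1, h2⟩
      · exact Or.inr ⟨h1, h4⟩

/-! ### Suprema of sequences and countable directedness -/

namespace RetractionalSkeleton

attribute [local instance] RetractionalSkeleton.po RetractionalSkeleton.ne

variable {X : Type u} [TopologicalSpace X] (𝔰 : RetractionalSkeleton X)

theorem fixed_of_le {s t : 𝔰.Γ} (h : s ≤ t) {x : X} (hx : 𝔰.r s x = x) : 𝔰.r t x = x := by
  have := (𝔰.comp_eq_of_le s t h x).2
  rwa [hx] at this

theorem mem_inducedSet {x : X} : x ∈ 𝔰.inducedSet ↔ ∃ s, 𝔰.r s x = x := by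
  simp only [inducedSet, mem_iUnion, mem_range]
  constructor
  · rintro ⟨s, y, rfl⟩
    exact ⟨s, 𝔰.isRetraction s y⟩
  · rintro ⟨s, hs⟩
    exact ⟨s, x, hs⟩

/-- Weakly increasing sequences are handled by passing to a subsequence that is either strictly
increasing or constant; convergence is only asserted along that subsequence. -/
theorem exists_sup_of_monotone (f : ℕ → 𝔰.Γ) (hf : Monotone f) :
    ∃ t, IsLUB (range f) t ∧ ∃ φ : ℕ → ℕ, StrictMono φ ∧
      ∀ x, Tendsto (fun n => 𝔰.r (f (φ n)) x) atTop (𝓝 (𝔰.r t x)) := by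
  have key : ∀ φ : ℕ → ℕ, StrictMono φ → ∀ t, IsLUB (range (f ∘ φ)) t → IsLUB (range f) t := by
    intro φ hφ t ht
    constructor
    · rintro _ ⟨n, rfl⟩
      exact (hf hφ.le_apply).trans (ht.1 ⟨n, rfl⟩)
    · intro b hb
      apply ht.2
      rintro _ ⟨n, rfl⟩
      exact hb ⟨φ n, rfl⟩
  obtain ⟨g, hg | hg⟩ := exists_increasing_or_nonincreasing_subseq (· < ·) f
  · obtain ⟨t, ht, htx⟩ := 𝔰.sup_seq (f ∘ g) (fun m n h => hg m n h)
    exact ⟨t, key g g.strictMono t ht, g, g.strictMono, htx⟩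
  · have hc : ∀ n, f (g n) = f (g 0) := by
      intro n
      rcases Nat.eq_zero_or_pos n with rfl | hn
      · rfl
      · exact ((hf (g.strictMono hn).le).eq_of_not_lt (hg 0 n hn)).symm
    refine ⟨f (g 0), key g g.strictMono _ ?_, g, g.strictMono, ?_⟩
    · have : f ∘ g = fun _ => f (g 0) := funext hc
      rw [this, range_const]
      exact isLUB_singleton
    · intro x
      simp only [hc]
      exact tendsto_const_nhds

/-- Countably many points of the induced set are fixed by a single retraction, whose index can be
taken above any given one. -/
theorem exists_ge_fixing (s : 𝔰.Γ) {A : Set X} (hA : A.Countable) (hAD : A ⊆ 𝔰.inducedSet) :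
    ∃ t, s ≤ t ∧ ∀ a ∈ A, 𝔰.r t a = a := by
  rcases A.eq_empty_or_nonempty with rfl | hne
  · exact ⟨s, le_rfl, by simp⟩
  obtain ⟨a, rfl⟩ := hA.exists_eq_range hne
  have h1 : ∀ n, ∃ v, 𝔰.r v (a n) = a n := fun n => 𝔰.mem_inducedSet.1 (hAD ⟨n, rfl⟩)
  choose v hv using h1
  choose w hw1 hw2 using 𝔰.directed
  let f : ℕ → 𝔰.Γ := fun n => Nat.rec s (fun k x => w x (v k)) n
  have hf : Monotone f := monotone_nat_of_le_succ fun n => hw1 (f n) (v n)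
  obtain ⟨t, ht, -⟩ := 𝔰.exists_sup_of_monotone f hf
  refine ⟨t, ht.1 ⟨0, rfl⟩, ?_⟩
  rintro _ ⟨n, rfl⟩
  exact 𝔰.fixed_of_le ((hw2 (f n) (v n)).trans (ht.1 ⟨n + 1, rfl⟩)) (hv n)

/-! ### Restriction of a skeleton to a compact subspace -/

variable {K : Type u} [TopologicalSpace K] [CompactSpace K] {e : K → X}

/-- The image of `K` under `r s` is compact metrizable, hence separable, so it is the image of the
closure of a countable subset of the dense trace of the induced set. -/
theorem exists_countable_image (he : Continuous e) (hd : Dense (e ⁻¹' 𝔰.inducedSet)) (s : 𝔰.Γ) :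
    ∃ A : Set K, A.Countable ∧ A ⊆ e ⁻¹' 𝔰.inducedSet ∧
      ∀ x, ∃ y ∈ closure A, 𝔰.r s (e y) = 𝔰.r s (e x) := by
  have := 𝔰.metrizable s
  let g : K → range (𝔰.r s) := fun x => ⟨𝔰.r s (e x), e x, rfl⟩
  have hg : Continuous g := ((𝔰.r s).continuous.comp he).subtype_mk _
  let := metrizableSpaceMetric (range (𝔰.r s))
  have hsep : IsSeparable (g '' (e ⁻¹' 𝔰.inducedSet)) :=
    (isCompact_range hg).isSeparable.mono (image_subset_range _ _)
  obtain ⟨T, hTS, hTc, hT⟩ := hsep.exists_countable_dense_subset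
  obtain ⟨A, hAS, hAc, hAT⟩ : ∃ A ⊆ e ⁻¹' 𝔰.inducedSet, A.Countable ∧ g '' A = T := by
    obtain ⟨A, hA, hinj⟩ := exists_subset_bijOn (e ⁻¹' 𝔰.inducedSet ∩ g ⁻¹' T) g
    refine ⟨A, hA.trans inter_subset_left, ?_, ?_⟩
    · apply Set.countable_of_injective_of_countable_image hinj.injOn
      rw [hinj.image_eq, image_inter_preimage]
      exact hTc.mono inter_subset_right
    · rw [hinj.image_eq, image_inter_preimage, inter_eq_right]
      exact hTS
  refine ⟨A, hAc, hAS, fun x => ?_⟩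
  have hcl : IsClosed (g '' closure A) := (isClosed_closure.isCompact.image hg).isClosed
  have h1 : closure T ⊆ g '' closure A :=
    closure_minimal (hAT ▸ image_mono subset_closure) hcl
  have h2 : e ⁻¹' 𝔰.inducedSet ⊆ g ⁻¹' (g '' closure A) :=
    fun z hz => h1 (hT ⟨z, hz, rfl⟩)
  have h3 := closure_minimal h2 (hcl.preimage hg) (hd x)
  obtain ⟨y, hy, hyx⟩ := h3
  exact ⟨y, hy, congrArg Subtype.val hyx⟩

/-- The indices whose retraction maps the image of `e` into itself are cofinal. -/
theorem exists_stable_ge [T2Space X] (he : Continuous e) (hd : Dense (e ⁻¹' 𝔰.inducedSet))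
    (s₀ : 𝔰.Γ) : ∃ t, s₀ ≤ t ∧ ∀ x, ∃ y, e y = 𝔰.r t (e x) := by
  choose A hAc hAD hA using 𝔰.exists_countable_image he hd
  have h1 : ∀ s, ∃ t, s ≤ t ∧ ∀ a ∈ e '' A s, 𝔰.r t a = a := fun s =>
    𝔰.exists_ge_fixing s ((hAc s).image e) (image_subset_iff.2 (hAD s))
  choose nxt hle hfix using h1
  let f : ℕ → 𝔰.Γ := fun n => Nat.rec s₀ (fun _ x => nxt x) n
  have hf : Monotone f := monotone_nat_of_le_succ fun n => hle (f n)
  obtain ⟨t, ht, φ, hφ, hlim⟩ := 𝔰.exists_sup_of_monotone f hf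
  refine ⟨t, ht.1 ⟨0, rfl⟩, fun x => ?_⟩
  have hfixA : ∀ y ∈ closure (⋃ n, A (f n)), 𝔰.r t (e y) = e y := by
    have hc : IsClosed {y | 𝔰.r t (e y) = e y} :=
      isClosed_eq ((𝔰.r t).continuous.comp he) he
    refine fun y hy => closure_minimal (iUnion_subset fun n a ha => ?_) hc hy
    exact 𝔰.fixed_of_le (ht.1 ⟨n + 1, rfl⟩) (hfix (f n) (e a) ⟨a, ha, rfl⟩)
  choose y hy hyx using fun n => hA (f n) x
  -- By compactness, some `z` in the closure of `⋃ n, A (f n)` has the same image as `x` under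
  -- every `r (f m)`, hence under `r t`.
  obtain ⟨z, hz⟩ : ∃ z, MapClusterPt z atTop y := exists_clusterPt_of_compactSpace _
  have hzcl : z ∈ closure (⋃ n, A (f n)) := by
    refine isClosed_closure.mem_of_mapClusterPt hz (Eventually.of_forall fun n => ?_)
    exact closure_mono (subset_iUnion (fun n => A (f n)) n) (hy n)
  have hzx : ∀ m, 𝔰.r (f m) (e z) = 𝔰.r (f m) (e x) := by
    intro m
    have hc : IsClosed {w | 𝔰.r (f m) (e w) = 𝔰.r (f m) (e x)} :=
      isClosed_eq ((𝔰.r (f m)).continuous.comp he) continuous_const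
    refine hc.mem_of_mapClusterPt hz ((eventually_ge_atTop m).mono fun n hn => ?_)
    have hmn := 𝔰.comp_eq_of_le _ _ (hf hn)
    change 𝔰.r (f m) (e (y n)) = 𝔰.r (f m) (e x)
    rw [← (hmn (e (y n))).1, hyx n, (hmn (e x)).1]
  refine ⟨z, ?_⟩
  rw [← hfixA z hzcl]
  refine tendsto_nhds_unique (hlim (e z)) ?_
  simp only [hzx]
  exact hlim (e x)

/-- If `K` is compact and embedded in a Hausdorff space with a skeleton, and the trace of the
induced set is dense in `K`, then this trace is induced by a skeleton in `K`. -/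
theorem isInduced_preimage [T2Space X] (he : IsEmbedding e)
    (hd : Dense (e ⁻¹' 𝔰.inducedSet)) : IsInducedByRSkeleton (e ⁻¹' 𝔰.inducedSet) := by
  have hcof := 𝔰.exists_stable_ge he.continuous hd
  let G : Type u := {s : 𝔰.Γ // ∀ x, ∃ y, e y = 𝔰.r s (e x)}
  choose R hR using fun s : G => s.2
  have hRc : ∀ s, Continuous (R s) := by
    intro s
    rw [he.continuous_iff]
    have : e ∘ R s = fun x => 𝔰.r s.1 (e x) := funext (hR s)
    rw [this]
    exact (𝔰.r s.1).continuous.comp he.continuous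
  have hcl : IsClosed (range e) := (isCompact_range he.continuous).isClosed
  have hup : ∀ s : 𝔰.Γ, ∃ t : G, s ≤ t.1 := fun s =>
    let ⟨t, h1, h2⟩ := hcof s
    ⟨⟨t, h2⟩, h1⟩
  let 𝔱 : RetractionalSkeleton K :=
    { Γ := G
      ne := let ⟨t, _⟩ := hup (Classical.arbitrary _); ⟨t⟩
      directed := by
        intro s t
        obtain ⟨w, h1, h2⟩ := 𝔰.directed s.1 t.1
        obtain ⟨v, hv⟩ := hup w
        exact ⟨v, h1.trans hv, h2.trans hv⟩
      r := fun s => ⟨R s, hRc s⟩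
      isRetraction := by
        intro s x
        apply he.injective
        simp only [ContinuousMap.coe_mk, hR, 𝔰.isRetraction]
      metrizable := by
        intro s
        have := 𝔰.metrizable s.1
        have hm : MapsTo e (range (R s)) (range (𝔰.r s.1)) := by
          rintro _ ⟨x, rfl⟩
          exact ⟨e x, (hR s x).symm⟩
        have hemb : IsEmbedding (hm.restrict e _ _) :=
          (he.comp IsEmbedding.subtypeVal).of_comp
            (he.continuous.restrict hm) continuous_subtype_val
        exact hemb.metrizableSpace
      tendsto_id := by
        intro x
        rw [he.tendsto_nhds_iff]
        have hat : Tendsto (fun s : G => s.1) atTop atTop := by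
          rw [tendsto_atTop]
          intro b
          obtain ⟨t, ht⟩ := hup b
          exact (eventually_ge_atTop t).mono fun s hs => ht.trans hs
        refine ((𝔰.tendsto_id (e x)).comp hat).congr fun s => ?_
        exact (hR s x).symm
      comp_eq_of_le := by
        intro s t hst x
        have h := 𝔰.comp_eq_of_le s.1 t.1 hst (e x)
        constructor <;> apply he.injective <;> simp only [ContinuousMap.coe_mk, hR, h]
      sup_seq := by
        intro f hf
        obtain ⟨t, ht, hlim⟩ := 𝔰.sup_seq (fun n => (f n).1) (fun m n h => hf h)
        have hgood : ∀ x, ∃ y, e y = 𝔰.r t (e x) := fun x =>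
          hcl.mem_of_tendsto (hlim (e x)) (Eventually.of_forall fun n => ⟨R (f n) x, hR _ _⟩)
        refine ⟨⟨t, hgood⟩, ⟨?_, ?_⟩, fun x => ?_⟩
        · rintro _ ⟨n, rfl⟩
          exact ht.1 ⟨n, rfl⟩
        · intro b hb
          apply ht.2
          rintro _ ⟨n, rfl⟩
          exact hb ⟨n, rfl⟩
        · rw [he.tendsto_nhds_iff]
          have h := hlim (e x)
          rw [← hR ⟨t, hgood⟩ x] at h
          refine h.congr fun n => ?_
          exact (hR (f n) x).symm }
  refine ⟨𝔱, ?_⟩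
  ext x
  rw [mem_inducedSet, mem_preimage, mem_inducedSet]
  constructor
  · rintro ⟨s, hs⟩
    exact ⟨s.1, (hR s x).symm.trans (congrArg e hs)⟩
  · rintro ⟨s, hs⟩
    obtain ⟨t, ht⟩ := hup s
    exact ⟨t, he.injective ((hR t x).trans (𝔰.fixed_of_le ht hs))⟩

/-! ### Product with a metrizable space -/

/-- The skeleton `(r s × id)` in the product with a metrizable space. -/
def prodId (Z : Type) [TopologicalSpace Z] [MetrizableSpace Z] :
    RetractionalSkeleton (X × Z) where
  Γ := 𝔰.Γ
  directed := 𝔰.directed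
  r s := (𝔰.r s).prodMap (ContinuousMap.id Z)
  isRetraction s x := Prod.ext (𝔰.isRetraction s x.1) rfl
  metrizable s := by
    have := 𝔰.metrizable s
    let j : range ((𝔰.r s).prodMap (ContinuousMap.id Z)) → range (𝔰.r s) × Z :=
      fun p => (⟨p.1.1, by obtain ⟨_, q, rfl⟩ := p; exact ⟨q.1, rfl⟩⟩, p.1.2)
    let i : range (𝔰.r s) × Z → X × Z := fun p => (p.1.1, p.2)
    have hj : Continuous j := by fun_prop
    have hi : Continuous i := by fun_prop
    have hemb : IsEmbedding j :=
      (IsEmbedding.subtypeVal :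
        IsEmbedding (Subtype.val : range ((𝔰.r s).prodMap (ContinuousMap.id Z)) → X × Z)).of_comp
        hj hi
    exact hemb.metrizableSpace
  tendsto_id x := (𝔰.tendsto_id x.1).prodMk_nhds tendsto_const_nhds
  comp_eq_of_le s t h x :=
    ⟨Prod.ext (𝔰.comp_eq_of_le s t h x.1).1 rfl, Prod.ext (𝔰.comp_eq_of_le s t h x.1).2 rfl⟩
  sup_seq f hf := by
    obtain ⟨t, ht, hlim⟩ := 𝔰.sup_seq f hf
    exact ⟨t, ht, fun x => (hlim x.1).prodMk_nhds tendsto_const_nhds⟩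

theorem inducedSet_prodId (Z : Type) [TopologicalSpace Z] [MetrizableSpace Z] :
    (𝔰.prodId Z).inducedSet = Prod.fst ⁻¹' 𝔰.inducedSet := by
  ext x
  rw [mem_inducedSet, mem_preimage, mem_inducedSet]
  exact exists_congr fun s => ⟨fun h => congrArg Prod.fst h, fun h => Prod.ext h rfl⟩

end RetractionalSkeleton

/-! ### The quotient collapsing `F` and maps injective on `F` -/

theorem collapse_mk_eq_iff {K : Type u} {F : Set K} {x y : K} :
    Quotient.mk (collapseSetoid F) x = Quotient.mk (collapseSetoid F) y ↔
      x = y ∨ (x ∈ F ∧ y ∈ F) :=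
  Quotient.eq

/-- Two points of `K` not both in `F` are separated by a Urysohn function that is constant on `F`,
and such a function factors through the quotient. -/
theorem t2Space_collapse {K : Type u} [TopologicalSpace K] [CompactSpace K] [T2Space K]
    {F : Set K} (hF : IsClosed F) : T2Space (Quotient (collapseSetoid F)) := by
  have key : ∀ x y : K, x ∉ F → x ≠ y → ∃ g : Quotient (collapseSetoid F) → ℝ, Continuous g ∧
      g (Quotient.mk _ x) ≠ g (Quotient.mk _ y) := by
    intro x y hx hxy
    obtain ⟨f, hf0, hf1, -⟩ := exists_continuous_zero_one_of_isClosed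
      (isClosed_singleton (x := x)) (hF.union (isClosed_singleton (x := y)))
      (by
        rw [disjoint_singleton_left]
        rintro (h | h)
        · exact hx h
        · exact hxy h)
    refine ⟨Quotient.lift f ?_, f.continuous.quotient_lift _, ?_⟩
    · rintro a b (rfl | ⟨ha, hb⟩)
      · rfl
      · exact (hf1 (Or.inl ha)).trans (hf1 (Or.inl hb)).symm
    · change f x ≠ f y
      rw [hf0 (mem_singleton x), hf1 (Or.inr (mem_singleton y))]
      simp
  have key2 : ∀ p q : Quotient (collapseSetoid F), p ≠ q →
      ∃ g : Quotient (collapseSetoid F) → ℝ, Continuous g ∧ g p ≠ g q := by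
    intro p q
    induction p using Quotient.inductionOn with | _ x
    induction q using Quotient.inductionOn with | _ y
    intro hpq
    have hxy : x ≠ y := fun h => hpq (h ▸ rfl)
    by_cases hx : x ∈ F
    · have hy : y ∉ F := fun hy => hpq (collapse_mk_eq_iff.2 (Or.inr ⟨hx, hy⟩))
      obtain ⟨g, hg, hne⟩ := key y x hy hxy.symm
      exact ⟨g, hg, hne.symm⟩
    · exact key x y hx hxy
  refine ⟨fun p q hpq => ?_⟩
  obtain ⟨g, hg, hne⟩ := key2 p q hpq
  exact separated_by_continuous hg hne

/-- The distances to a dense sequence separate the points of a compact metrizable space. -/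
theorem exists_injective_map_of_compact_metrizable (Y : Type u) [TopologicalSpace Y]
    [CompactSpace Y] [MetrizableSpace Y] : ∃ g : C(Y, ℕ → ℝ), Function.Injective g := by
  let := metrizableSpaceMetric Y
  cases isEmpty_or_nonempty Y
  · exact ⟨⟨fun _ => 0, continuous_const⟩, fun x => isEmptyElim x⟩
  refine ⟨⟨fun x n => dist x (denseSeq Y n), by fun_prop⟩, fun x y hxy => ?_⟩
  have h1 : (fun z => dist x z) = fun z => dist y z :=
    (denseRange_denseSeq Y).equalizer (by fun_prop) (by fun_prop) hxy
  simpa using (congrFun h1 y)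

/-- Let `K` be compact Hausdorff, `F ⊆ K` closed and metrizable, and let `L` be the quotient
of `K` collapsing `F` to a point, with quotient map `Q`. If `D` is induced by an r-skeleton
in `L` and `Q ⁻¹' D` is dense in `K`, then `Q ⁻¹' D` is induced by an r-skeleton in `K`. -/
theorem inducedByRSkeleton_of_collapse_quotient (K : Type u) [TopologicalSpace K]
    [CompactSpace K] [T2Space K] (F : Set K) (hF : IsClosed F)
    (hFmetr : MetrizableSpace ↥F)
    (D : Set (Quotient (collapseSetoid F)))
    (hD : IsInducedByRSkeleton D)
    (hdense : Dense (Quotient.mk (collapseSetoid F) ⁻¹' D)) :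
    IsInducedByRSkeleton (Quotient.mk (collapseSetoid F) ⁻¹' D) := by
  obtain ⟨𝔰, rfl⟩ := hD
  have := t2Space_collapse hF
  have : CompactSpace F := isCompact_iff_compactSpace.1 hF.isCompact
  obtain ⟨g, hg⟩ := exists_injective_map_of_compact_metrizable F
  obtain ⟨h, hh⟩ := g.exists_restrict_eq hF
  let e : K → Quotient (collapseSetoid F) × (ℕ → ℝ) := fun x => (Quotient.mk _ x, h x)
  have hec : Continuous e := continuous_quotient_mk'.prodMk h.continuous
  have hei : Function.Injective e := by
    intro x y hxy
    obtain ⟨h1, h2⟩ := Prod.ext_iff.1 hxy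
    rcases collapse_mk_eq_iff.1 h1 with h3 | ⟨hx, hy⟩
    · exact h3
    · have h4 : g ⟨x, hx⟩ = g ⟨y, hy⟩ := by
        rw [← hh]
        exact h2
      exact congrArg Subtype.val (hg h4)
  have hpre : e ⁻¹' (𝔰.prodId (ℕ → ℝ)).inducedSet =
      Quotient.mk (collapseSetoid F) ⁻¹' 𝔰.inducedSet := by
    rw [RetractionalSkeleton.inducedSet_prodId]
    rfl
  rw [← hpre] at hdense ⊢
  exact (𝔰.prodId (ℕ → ℝ)).isInduced_preimage (hec.isClosedEmbedding hei).isEmbedding hdense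
end

section
/- Let X be a Banach space such that the ordinal interval [0,ω₁] embeds homeomorphically into (B_{X*}, w*). Then for every point e ∈ X and every ε > 0 there exists a w*-compact convex set L ⊂ {x* ∈ X* : x*(e) = 0} ∩ εB_{X*} that does not have a retractional skeleton (with respect to the weak* topology). -/
/-!
Rescaling and translating the embedding gives a continuous injective `g : [0, ω₁] → (X*, w*)` into
a small ball with `g ω₁ = 0`. Since `ω₁` has uncountable cofinality, any countable set of vectors
of `X` is annihilated by `g ξ` for all large `ξ` (`exists_tail_vanish`).

Let `K` be the weak* closed convex hull of a tail `{g ξ : δ ≤ ξ ≤ ω₁}`, where `δ` is so large that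
`0` is not in the closed convex hull of any countable arc `{g ξ : δ ≤ ξ ≤ γ}`, `γ < ω₁`
(`exists_arcHull_not_mem`). Two values `p, q` of `g` are chosen together with vectors `x, y`
biorthogonal to them and vanishing on `K`, and `L` is the convex hull of `K` and the parabolic
region `{a p + b q : a² ≤ b ≤ 1}`.

Suppose `L` has a retractional skeleton. Every nonempty countable intersection of level sets of
evaluations contains a point fixed by some retraction
(`RetractionalSkeleton.exists_ge_eval_eq`). In particular the exposed points `a p + a² q`, `a > 0`,
are fixed by retractions, and hence so is their limit `0` as `a → 0`
(`RetractionalSkeleton.exists_fixes_limit`).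

On the other hand the range of a retraction `r` fixing `0` is metrizable, so `r` sends to `0` the
whole annihilator in `L` of some countable set (`exists_countable_annihilator`). Inside such an
annihilator there is a level set of an evaluation contained in the hull of a countable arc
(`exists_peak`), and therefore a point `d` of that hull fixed by a later retraction. Iterating gives
`s₀ < s₁ < ⋯` and points `d n` with `r (s (n + 1)) (d n) = d n` and `r (s m) (d n) = 0` for `m ≤ n`.
If `t = sup s n`, a cluster point `D` of `d n` satisfies both `r t D = D` and `r t D = 0`, although
`D` lies in the hull of a countable arc and is thus nonzero (`false_of_fixes_zero`).
-/

open Filter Topology TopologicalSpace Set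

universe u v

/-- The closed unit ball of the dual of `X`, as a subset of the weak* dual `(X*, w*)`. -/
def dualBall (X : Type u) [NormedAddCommGroup X] [NormedSpace ℝ X] : Set (WeakDual ℝ X) :=
  {φ | ∀ x : X, |φ x| ≤ ‖x‖}

/-- The first uncountable ordinal `ω₁`. -/
noncomputable def omega1 : Ordinal.{0} := (Cardinal.aleph 1).ord

/-- The ordinal segment `[0, ω₁]` with its (order-induced) topology. -/
abbrev OrdinalSegmentOmega1 : Type 1 := ↥(Set.Iic omega1)

/-! ### Retractional skeletons without a largest index -/

attribute [local instance] RetractionalSkeleton.po RetractionalSkeleton.ne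

namespace RetractionalSkeleton

variable {K : Type u} [TopologicalSpace K] (𝔰 : RetractionalSkeleton K)

/-- A maximal index is largest by directedness, and then its retraction is the limit `id`. -/
lemma exists_gt_or_eq_id [T2Space K] (s : 𝔰.Γ) : (∃ s', s < s') ∨ ∀ x, 𝔰.r s x = x := by
  by_cases h : ∃ s', s < s'
  · exact Or.inl h
  · right
    intro x
    have hmax : ∀ u : 𝔰.Γ, u ≤ s := by
      intro u
      obtain ⟨w, hsw, huw⟩ := 𝔰.directed s u
      rcases hsw.lt_or_eq with hlt | heq
      · exact absurd ⟨w, hlt⟩ h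
      · exact heq ▸ huw
    have hev : (fun u => 𝔰.r u x) =ᶠ[atTop] fun _ => 𝔰.r s x := by
      filter_upwards [eventually_ge_atTop s] with u hu
      rw [le_antisymm (hmax u) hu]
    have : IsDirectedOrder 𝔰.Γ := ⟨𝔰.directed⟩
    exact tendsto_nhds_unique (tendsto_const_nhds.congr' hev.symm) (𝔰.tendsto_id x)

lemma exists_strictMono_ge (hno : ∀ s : 𝔰.Γ, ∃ s', s < s') (N : ℕ → 𝔰.Γ) :
    ∃ v : ℕ → 𝔰.Γ, StrictMono v ∧ ∀ n, N n ≤ v n := by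
  have step : ∀ s t : 𝔰.Γ, ∃ w, s < w ∧ t ≤ w := by
    intro s t
    obtain ⟨w, hsw, htw⟩ := 𝔰.directed s t
    obtain ⟨w', hw'⟩ := hno w
    exact ⟨w', hsw.trans_lt hw', htw.trans hw'.le⟩
  choose F hF1 hF2 using step
  let v : ℕ → 𝔰.Γ := fun n => Nat.rec (N 0) (fun k w => F w (N (k + 1))) n
  refine ⟨v, strictMono_nat_of_lt_succ fun n => hF1 _ _, fun n => ?_⟩
  cases n with
  | zero => exact le_rfl
  | succ k => exact hF2 _ _

/-- The induced set meets every nonempty countable intersection of level sets: the witness is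
`r t z`, where `t` is the supremum of a sequence along which each `φ i (r s z)` converges to
`φ i z`. -/
lemma exists_ge_eval_eq (hno : ∀ s : 𝔰.Γ, ∃ s', s < s') (φ : ℕ → K → ℝ)
    (hφ : ∀ i, Continuous (φ i)) (z : K) (s₀ : 𝔰.Γ) :
    ∃ t, s₀ ≤ t ∧ ∀ i, φ i (𝔰.r t z) = φ i z := by
  have : IsDirectedOrder 𝔰.Γ := ⟨𝔰.directed⟩
  have hN : ∀ n : ℕ, ∃ N : 𝔰.Γ, ∀ s, N ≤ s → ∀ i ∈ Finset.range (n + 1),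
      |φ i (𝔰.r s z) - φ i z| < 1 / ((n : ℝ) + 1) := by
    intro n
    have : ∀ᶠ s in (atTop : Filter 𝔰.Γ), ∀ i ∈ Finset.range (n + 1),
        |φ i (𝔰.r s z) - φ i z| < 1 / ((n : ℝ) + 1) := by
      rw [Filter.eventually_all_finset]
      intro i _
      have h := ((hφ i).tendsto z).comp (𝔰.tendsto_id z)
      exact Metric.tendsto_nhds.1 h _ Nat.one_div_pos_of_nat
    exact eventually_atTop.1 this
  choose N hN using hN
  choose M hM1 hM2 using fun n => 𝔰.directed (N n) s₀
  obtain ⟨v, hv, hMv⟩ := 𝔰.exists_strictMono_ge hno M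
  obtain ⟨t, ht, hlim⟩ := 𝔰.sup_seq v hv
  refine ⟨t, ((hM2 0).trans (hMv 0)).trans (ht.1 ⟨0, rfl⟩), fun i => ?_⟩
  refine tendsto_nhds_unique (((hφ i).tendsto _).comp (hlim z)) ?_
  rw [tendsto_iff_dist_tendsto_zero]
  refine squeeze_zero' (Eventually.of_forall fun _ => dist_nonneg) ?_
    tendsto_one_div_add_atTop_nhds_zero_nat
  filter_upwards [eventually_ge_atTop i] with n hn
  exact (hN n (v n) ((hM1 n).trans (hMv n)) i (by simp; omega)).le

/-- The set of points fixed by some `r s` is sequentially closed, and a point fixed by `r t` is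
fixed by all later retractions. -/
lemma exists_fixes_limit [T2Space K] (hno : ∀ s : 𝔰.Γ, ∃ s', s < s') (z : ℕ → K) (z₀ : K)
    (hz : ∀ n, ∃ s, 𝔰.r s (z n) = z n) (hlim : Tendsto z atTop (𝓝 z₀)) :
    ∃ t, ∀ s, t ≤ s → 𝔰.r s z₀ = z₀ := by
  choose N hN using hz
  obtain ⟨v, hv, hNv⟩ := 𝔰.exists_strictMono_ge hno N
  obtain ⟨t, ht, -⟩ := 𝔰.sup_seq v hv
  refine ⟨t, fun s hs => ?_⟩
  have hfix : ∀ n, 𝔰.r s (z n) = z n := by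
    intro n
    have hle : N n ≤ s := ((hNv n).trans (ht.1 ⟨n, rfl⟩)).trans hs
    have := (𝔰.comp_eq_of_le _ _ hle (z n)).2
    rwa [hN n] at this
  exact tendsto_nhds_unique
    ((((𝔰.r s).continuous.tendsto z₀).comp hlim).congr fun n => hfix n) hlim

end RetractionalSkeleton

/-- The fiber over `0` of a retraction fixing `0` contains the annihilator in `L` of a countable
set: it is a `G_δ` set because the range of `r s` is metrizable, and each weak* neighbourhood of `0`
involves only finitely many vectors. -/
lemma exists_countable_annihilator {X : Type u} [NormedAddCommGroup X] [NormedSpace ℝ X]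
    {L : Set (WeakDual ℝ X)} (𝔰 : RetractionalSkeleton L) (z : L) (hz : (z : WeakDual ℝ X) = 0)
    (s : 𝔰.Γ) (hs : 𝔰.r s z = z) :
    ∃ A : Set X, A.Countable ∧ ∀ q : L, (∀ x ∈ A, (q : WeakDual ℝ X) x = 0) → 𝔰.r s q = z := by
  have := 𝔰.metrizable s
  let R : L → Set.range (𝔰.r s) := fun q => ⟨𝔰.r s q, q, rfl⟩
  have hR : Continuous R := (𝔰.r s).continuous.subtype_mk _
  obtain ⟨V, hV⟩ := (𝓝 (R z)).exists_antitone_basis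
  have hU : ∀ n, ∃ F : Finset X, ∃ δ > 0, ∀ q : L,
      (∀ x ∈ F, |(q : WeakDual ℝ X) x| < δ) → R q ∈ V n := by
    intro n
    have h1 : R ⁻¹' V n ∈ 𝓝 z := hR.continuousAt (hV.1.mem_of_mem trivial)
    rw [nhds_subtype_eq_comap, mem_comap] at h1
    obtain ⟨W, hW, hWV⟩ := h1
    rw [hz] at hW
    obtain ⟨⟨F, δ⟩, hδ, hF⟩ := (WeakDual.withSeminorms ℝ X).hasBasis_zero_ball.mem_iff.1 hW
    refine ⟨F, δ, hδ, fun q hq => hWV (hF ?_)⟩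
    rw [Seminorm.mem_ball_zero]
    exact Seminorm.finset_sup_apply_lt hδ fun x hx => by simpa using hq x hx
  choose F δ hδ hF using hU
  refine ⟨⋃ n, (F n : Set X), countable_iUnion fun n => (F n).countable_toSet, fun q hq => ?_⟩
  have hmem : ∀ n, R q ∈ V n := fun n => hF n q fun x hx => by
    rw [hq x (mem_iUnion.2 ⟨n, hx⟩)]; simpa using hδ n
  have hRq : R q = R z := by
    by_contra hne
    obtain ⟨n, hn⟩ := hV.1.mem_iff.1 (isOpen_compl_singleton.mem_nhds (Ne.symm hne))
    exact hn.2 (hmem n) rfl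
  have := congrArg Subtype.val hRq
  simpa [R, hs] using this

lemma isCompact_convexJoin {E : Type*} [AddCommGroup E] [Module ℝ E] [TopologicalSpace E]
    [ContinuousAdd E] [ContinuousSMul ℝ E] {s t : Set E} (hs : IsCompact s) (ht : IsCompact t) :
    IsCompact (convexJoin ℝ s t) := by
  have himg : convexJoin ℝ s t = (fun w : (E × E) × ℝ => (1 - w.2) • w.1.1 + w.2 • w.1.2) ''
      ((s ×ˢ t) ×ˢ Icc (0 : ℝ) 1) := by
    ext z
    simp only [mem_convexJoin, segment_eq_image, mem_image, mem_prod, Prod.exists]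
    constructor
    · rintro ⟨a, ha, b, hb, θ, hθ, rfl⟩
      exact ⟨a, b, θ, ⟨⟨ha, hb⟩, hθ⟩, rfl⟩
    · rintro ⟨a, b, θ, ⟨⟨ha, hb⟩, hθ⟩, rfl⟩
      exact ⟨a, ha, b, hb, θ, hθ, rfl⟩
  rw [himg]
  exact ((hs.prod ht).prod isCompact_Icc).image (by fun_prop)

/-! ### Hulls of arcs -/

section LongLine

variable {T : Type v} [LinearOrder T] {X : Type u} [NormedAddCommGroup X] [NormedSpace ℝ X]
  {g : T → WeakDual ℝ X}

/-- The weak* closed convex hull of the arc `{g ξ : a ≤ ξ ≤ b}`. -/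
def arcHull (g : T → WeakDual ℝ X) (a b : T) : Set (WeakDual ℝ X) :=
  closedConvexHull ℝ (g '' Icc a b)

lemma arcHull_mono {a a' b b' : T} (ha : a' ≤ a) (hb : b ≤ b') :
    arcHull g a b ⊆ arcHull g a' b' :=
  (closedConvexHull ℝ).monotone (image_mono (Icc_subset_Icc ha hb))

lemma mem_arcHull {a b ξ : T} (h : ξ ∈ Icc a b) : g ξ ∈ arcHull g a b :=
  subset_closedConvexHull (mem_image_of_mem g h)

lemma isClosed_arcHull {a b : T} : IsClosed (arcHull g a b) := isClosed_closedConvexHull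

lemma convex_arcHull {a b : T} : Convex ℝ (arcHull g a b) := convex_closedConvexHull

lemma arcHull_apply_eq {a b : T} {x : X} {c : ℝ} (h : ∀ ξ ∈ Icc a b, g ξ x = c)
    {q : WeakDual ℝ X} (hq : q ∈ arcHull g a b) : q x = c := by
  have hsub : arcHull g a b ⊆ {φ : WeakDual ℝ X | φ x = c} := by
    refine closedConvexHull_min ?_ ?_ ?_
    · rintro _ ⟨ξ, hξ, rfl⟩
      exact h ξ hξ
    · intro φ hφ ψ hψ α β hα hβ hαβ
      change α * φ x + β * ψ x = c
      rw [show φ x = c from hφ, show ψ x = c from hψ, ← add_mul, hαβ, one_mul]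
    · exact isClosed_eq (WeakDual.eval_continuous x) continuous_const
  exact hsub hq

lemma isCompact_dualBall_smul (ρ : ℝ) (hρ : 0 ≤ ρ) :
    IsCompact {φ : WeakDual ℝ X | ∀ x, |φ x| ≤ ρ * ‖x‖} := by
  have h := WeakDual.isCompact_closedBall (𝕜 := ℝ) (E := X) 0 ρ
  convert h using 1
  ext φ
  simp only [mem_ofPred_eq, mem_preimage, mem_closedBall_zero_iff]
  rw [ContinuousLinearMap.opNorm_le_iff hρ]
  rfl

lemma convex_dualBall_smul (ρ : ℝ) : Convex ℝ {φ : WeakDual ℝ X | ∀ x, |φ x| ≤ ρ * ‖x‖} := by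
  intro φ hφ ψ hψ α β hα hβ hαβ x
  change |α * φ x + β * ψ x| ≤ _
  calc _ ≤ |α * φ x| + |β * ψ x| := abs_add_le _ _
    _ = α * |φ x| + β * |ψ x| := by rw [abs_mul, abs_mul, abs_of_nonneg hα, abs_of_nonneg hβ]
    _ ≤ α * (ρ * ‖x‖) + β * (ρ * ‖x‖) := by gcongr; exacts [hφ x, hψ x]
    _ = ρ * ‖x‖ := by rw [← add_mul, hαβ, one_mul]

lemma arcHull_subset_ball {ρ : ℝ} (hρ : 0 ≤ ρ) (hb : ∀ ξ x, |g ξ x| ≤ ρ * ‖x‖) (a b : T) :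
    arcHull g a b ⊆ {φ : WeakDual ℝ X | ∀ x, |φ x| ≤ ρ * ‖x‖} := by
  refine closedConvexHull_min ?_ (convex_dualBall_smul ρ) (isCompact_dualBall_smul ρ hρ).isClosed
  rintro _ ⟨ξ, -, rfl⟩
  exact hb ξ

lemma isCompact_arcHull {ρ : ℝ} (hρ : 0 ≤ ρ) (hb : ∀ ξ x, |g ξ x| ≤ ρ * ‖x‖) (a b : T) :
    IsCompact (arcHull g a b) :=
  (isCompact_dualBall_smul ρ hρ).of_isClosed_subset isClosed_arcHull
    (arcHull_subset_ball hρ hb a b)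

lemma arcHull_subset_convexJoin {ρ : ℝ} (hρ : 0 ≤ ρ) (hb : ∀ ξ x, |g ξ x| ≤ ρ * ‖x‖)
    {a b c : T} (hab : a ≤ b) (hbc : b ≤ c) :
    arcHull g a c ⊆ convexJoin ℝ (arcHull g a b) (arcHull g b c) := by
  refine closedConvexHull_min ?_ (convex_arcHull.convexJoin convex_arcHull)
    (isCompact_convexJoin (isCompact_arcHull hρ hb a b) (isCompact_arcHull hρ hb b c)).isClosed
  rintro _ ⟨ξ, hξ, rfl⟩
  rcases le_total ξ b with h | h
  · exact subset_convexJoin_left ⟨g b, mem_arcHull ⟨le_rfl, hbc⟩⟩ (mem_arcHull ⟨hξ.1, h⟩)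
  · exact subset_convexJoin_right ⟨g b, mem_arcHull ⟨hab, le_rfl⟩⟩ (mem_arcHull ⟨h, hξ.2⟩)

/-! ### Arcs of a long interval

The hypothesis `hω` below says that `⊤` is a limit of uncountable cofinality, as `ω₁` is. -/

variable [OrderTop T] [TopologicalSpace T] [OrderTopology T]

/-- Countably many evaluations of `g` all vanish on a common tail: each tends to `0` at `⊤`, and
`⊤` has uncountable cofinality. -/
lemma exists_tail_vanish (hω : ∀ w : ℕ → T, (∀ n, w n < ⊤) → ∃ b < ⊤, ∀ n, w n < b)
    (hg : Continuous g) (hg0 : g ⊤ = 0) {A : Set X} (hA : A.Countable) {a₀ : T} (ha₀ : a₀ < ⊤) :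
    ∃ b < ⊤, a₀ ≤ b ∧ ∀ ξ, b ≤ ξ → ∀ x ∈ A, g ξ x = 0 := by
  obtain ⟨w, hw⟩ := (hA.insert 0).exists_eq_range (insert_nonempty _ _)
  have hstep : ∀ n : ℕ × ℕ, ∃ l < ⊤, a₀ ≤ l ∧ ∀ ξ, l < ξ → |g ξ (w n.1)| < 1 / ((n.2 : ℝ) + 1) := by
    intro n
    have hc : Continuous fun ξ => |g ξ (w n.1)| :=
      ((WeakDual.eval_continuous (w n.1)).comp hg).abs
    have hnear : ∀ᶠ ξ in 𝓝 (⊤ : T), |g ξ (w n.1)| < 1 / ((n.2 : ℝ) + 1) := by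
      refine hc.continuousAt.eventually_lt_const ?_
      change |g ⊤ (w n.1)| < _
      rw [hg0]
      change |(0 : ℝ)| < _
      rw [abs_zero]
      exact Nat.one_div_pos_of_nat
    obtain ⟨l, hl, hsub⟩ := exists_Ioc_subset_of_mem_nhds hnear ⟨a₀, ha₀⟩
    exact ⟨max a₀ l, max_lt ha₀ hl, le_max_left _ _,
      fun ξ hξ => hsub ⟨(le_max_right _ _).trans_lt hξ, le_top⟩⟩
  choose l hl1 hl2 hl3 using hstep
  obtain ⟨b, hb, hle⟩ := hω (fun n => l (Nat.unpair n)) fun n => hl1 _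
  have hle' : ∀ i j, l (i, j) < b := fun i j => by simpa using hle (Nat.pair i j)
  refine ⟨b, hb, (hl2 (0, 0)).trans (hle' 0 0).le, fun ξ hξ x hx => ?_⟩
  obtain ⟨i, rfl⟩ : x ∈ range w := hw ▸ mem_insert_of_mem 0 hx
  refine abs_eq_zero.1 (le_antisymm ?_ (abs_nonneg _))
  exact ge_of_tendsto' tendsto_one_div_add_atTop_nhds_zero_nat
    fun j => (hl3 (i, j) ξ ((hle' i j).trans_le hξ)).le

/-- Some tail of arcs has hulls avoiding `0`. Otherwise there is an increasing sequence `w` with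
`0` in the hull of every arc `[w n, w (n + 1)]`; these arcs converge to `g (sup w) ≠ 0`, so some
evaluation is bounded away from `0` on the hulls of late arcs. -/
lemma exists_arcHull_not_mem [WellFoundedLT T]
    (hω : ∀ w : ℕ → T, (∀ n, w n < ⊤) → ∃ b < ⊤, ∀ n, w n < b)
    (hg : Continuous g) (hne : ∀ ξ < ⊤, g ξ ≠ 0) {a₀ : T} (ha₀ : a₀ < ⊤) :
    ∃ δ < ⊤, a₀ ≤ δ ∧ ∀ γ < ⊤, (0 : WeakDual ℝ X) ∉ arcHull g δ γ := by
  by_contra! hcon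
  have hstep : ∀ δ : {δ : T // δ < ⊤ ∧ a₀ ≤ δ}, ∃ γ : {γ : T // γ < ⊤ ∧ a₀ ≤ γ},
      δ.1 ≤ γ.1 ∧ (0 : WeakDual ℝ X) ∈ arcHull g δ.1 γ.1 := by
    rintro ⟨δ, hδ, hδ'⟩
    obtain ⟨γ, hγ, h0⟩ := hcon δ hδ hδ'
    exact ⟨⟨max δ γ, max_lt hδ hγ, hδ'.trans (le_max_left _ _)⟩, le_max_left _ _,
      arcHull_mono le_rfl (le_max_right _ _) h0⟩
  choose F hF1 hF2 using hstep
  let w : ℕ → {δ : T // δ < ⊤ ∧ a₀ ≤ δ} := fun n => Nat.rec ⟨a₀, ha₀, le_rfl⟩ (fun _ d => F d) n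
  have hmono : Monotone fun n => (w n).1 := monotone_nat_of_le_succ fun n => hF1 (w n)
  obtain ⟨b, hb, hwb⟩ := hω (fun n => (w n).1) fun n => (w n).2.1
  have hbu : b ∈ upperBounds (range fun n => (w n).1) := by
    rintro _ ⟨n, rfl⟩; exact (hwb n).le
  obtain ⟨c, hcmem, hcmin⟩ := wellFounded_lt.has_min _ ⟨b, hbu⟩
  have hlub : IsLUB (range fun n => (w n).1) c := ⟨hcmem, fun y hy => not_lt.1 (hcmin y hy)⟩
  have hct : c < ⊤ := (hlub.2 hbu).trans_lt hb
  have htend := tendsto_atTop_isLUB hmono hlub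
  obtain ⟨x, hx⟩ : ∃ x, g c x ≠ 0 := by
    by_contra! h
    exact hne c hct (DFunLike.ext _ _ h)
  have hU : {ξ : T | (g c x) ^ 2 / 2 ≤ g ξ x * g c x} ∈ 𝓝 c := by
    have hc : Continuous fun ξ => g ξ x * g c x :=
      ((WeakDual.eval_continuous x).comp hg).mul continuous_const
    have hpos : 0 < (g c x) ^ 2 := by positivity
    have hlt : (g c x) ^ 2 / 2 < g c x * g c x := by nlinarith
    filter_upwards [hc.continuousAt.eventually_const_lt hlt] with ξ hξ using hξ.le
  have hsmall := (htend.Icc (htend.comp (tendsto_add_atTop_nat 1))).eventually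
    (eventually_smallSets.2 ⟨_, hU, fun s hs => hs⟩)
  obtain ⟨n, hn⟩ := hsmall.exists
  have hsub : arcHull g (w n).1 (w (n + 1)).1 ⊆
      {φ : WeakDual ℝ X | (g c x) ^ 2 / 2 ≤ φ x * g c x} := by
    refine closedConvexHull_min ?_ ?_ ?_
    · rintro _ ⟨ξ, hξ, rfl⟩
      exact hn hξ
    · intro φ hφ ψ hψ α β hα hβ hαβ
      change _ ≤ (α * φ x + β * ψ x) * g c x
      have h1 : α * ((g c x) ^ 2 / 2) ≤ α * (φ x * g c x) := mul_le_mul_of_nonneg_left hφ hα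
      have h2 : β * ((g c x) ^ 2 / 2) ≤ β * (ψ x * g c x) := mul_le_mul_of_nonneg_left hψ hβ
      calc (g c x) ^ 2 / 2 = α * ((g c x) ^ 2 / 2) + β * ((g c x) ^ 2 / 2) := by
            rw [← add_mul, hαβ, one_mul]
        _ ≤ _ := by linarith
    · exact isClosed_le continuous_const ((WeakDual.eval_continuous x).mul continuous_const)
  have h0 : (g c x) ^ 2 / 2 ≤ (0 : ℝ) * g c x := hsub (hF2 (w n))
  have hpos : 0 < (g c x) ^ 2 := by positivity
  linarith

/-- Among the functionals in `arcHull g δ ⊤` annihilating a countable set `A`, those maximising a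
suitable evaluation lie in the hull of an initial arc: the part of such a functional carried by
a far tail is invisible to `A` and to the evaluation, hence must have weight `0`. -/
lemma exists_peak (hω : ∀ w : ℕ → T, (∀ n, w n < ⊤) → ∃ b < ⊤, ∀ n, w n < b)
    (hg : Continuous g) (hg0 : g ⊤ = 0) (hne : ∀ ξ < ⊤, g ξ ≠ 0)
    {ρ : ℝ} (hρ : 0 ≤ ρ) (hbd : ∀ ξ x, |g ξ x| ≤ ρ * ‖x‖) {δ : T} (hδ : δ < ⊤)
    {A : Set X} (hA : A.Countable) :
    ∃ x : X, ∃ b < ⊤, ∃ z ∈ arcHull g δ ⊤, (∀ a ∈ A, z a = 0) ∧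
      ∀ q ∈ arcHull g δ ⊤, (∀ a ∈ A, q a = 0) → q x = z x → q ∈ arcHull g δ b := by
  obtain ⟨b₁, hb₁, hδb₁, hvan₁⟩ := exists_tail_vanish hω hg hg0 hA hδ
  obtain ⟨x, hx⟩ : ∃ x, 0 < g b₁ x := by
    by_contra! h
    refine hne b₁ hb₁ (DFunLike.ext _ _ fun x => le_antisymm (h x) ?_)
    have := h (-x)
    rw [map_neg] at this
    change (0 : ℝ) ≤ _
    linarith
  obtain ⟨b, hb, hbb, hvan⟩ := exists_tail_vanish hω hg hg0 (hA.insert x) hb₁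
  have hcl : IsClosed {φ : WeakDual ℝ X | ∀ a ∈ A, φ a = 0} := by
    simp only [ofPred_forall]
    exact isClosed_biInter fun a _ => isClosed_eq (WeakDual.eval_continuous a) continuous_const
  obtain ⟨z, ⟨hzK, hzA⟩, hzmax⟩ :=
    ((isCompact_arcHull hρ hbd δ ⊤).inter_right hcl).exists_isMaxOn
      ⟨g b₁, mem_arcHull ⟨hδb₁, le_top⟩, fun a ha => hvan₁ b₁ le_rfl a ha⟩
      (WeakDual.eval_continuous x).continuousOn
  have hzpos : 0 < z x :=
    hx.trans_le (hzmax ⟨mem_arcHull ⟨hδb₁, le_top⟩, fun a ha => hvan₁ b₁ le_rfl a ha⟩)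
  refine ⟨x, b, hb, z, hzK, hzA, fun q hqK hqA hqx => ?_⟩
  obtain ⟨k, hk, m, hm, α, β, hα, hβ, hαβ, rfl⟩ := mem_convexJoin.1
    (arcHull_subset_convexJoin hρ hbd (hδb₁.trans hbb) le_top hqK)
  have hm0 : ∀ a ∈ insert x A, m a = 0 := fun a ha =>
    arcHull_apply_eq (fun ξ hξ => hvan ξ hξ.1 a ha) hm
  have hval : ∀ a ∈ insert x A, (α • k + β • m) a = α * k a := fun a ha => by
    change α * k a + β * m a = _
    rw [hm0 a ha, mul_zero, add_zero]
  rw [hval x (mem_insert _ _)] at hqx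
  have hαpos : 0 < α := by
    rcases hα.lt_or_eq with h | h
    · exact h
    · rw [← h, zero_mul] at hqx; linarith
  have hkA : ∀ a ∈ A, k a = 0 := fun a ha => by
    have := hqA a ha
    rw [hval a (mem_insert_of_mem _ ha)] at this
    exact (mul_eq_zero.1 this).resolve_left hαpos.ne'
  have hkx : k x ≤ z x := hzmax ⟨arcHull_mono le_rfl le_top hk, hkA⟩
  have hα1 : α = 1 := by
    have : α ≤ 1 := by linarith
    nlinarith
  have hβ0 : β = 0 := by linarith
  simpa [hα1, hβ0] using hk

/-! ### The construction of `L` -/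

/-- The contradiction: a skeleton whose retractions eventually fix `0` cannot exist on a compact
set `L` containing `arcHull g δ ⊤` as the annihilator of two vectors. One builds `s n` strictly
increasing and `d n` fixed by `r (s (n + 1))` in hulls of countable arcs with
`r (s m) (d n) = 0` for `m ≤ n`; a cluster point `d` of `d n` satisfies `r t d = d` and
`r t d = 0` for `t = sup s`, but `d ≠ 0`. -/
lemma false_of_fixes_zero (hω : ∀ w : ℕ → T, (∀ n, w n < ⊤) → ∃ b < ⊤, ∀ n, w n < b)
    (hg : Continuous g) (hg0 : g ⊤ = 0) (hne : ∀ ξ < ⊤, g ξ ≠ 0)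
    {ρ : ℝ} (hρ : 0 ≤ ρ) (hbd : ∀ ξ x, |g ξ x| ≤ ρ * ‖x‖) {δ : T} (hδ : δ < ⊤)
    (hδ0 : ∀ γ < ⊤, (0 : WeakDual ℝ X) ∉ arcHull g δ γ)
    {L : Set (WeakDual ℝ X)} (hL : IsCompact L) (hKL : arcHull g δ ⊤ ⊆ L) (x₀ y₀ : X)
    (hLK : ∀ q ∈ L, q x₀ = 0 → q y₀ = 0 → q ∈ arcHull g δ ⊤)
    (hx₀ : ∀ q ∈ arcHull g δ ⊤, q x₀ = 0) (hy₀ : ∀ q ∈ arcHull g δ ⊤, q y₀ = 0)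
    (𝔰 : RetractionalSkeleton L) (hno : ∀ s : 𝔰.Γ, ∃ s', s < s')
    (o : L) (ho : (o : WeakDual ℝ X) = 0) (t₀ : 𝔰.Γ) (ht₀ : ∀ s, t₀ ≤ s → 𝔰.r s o = o) :
    False := by
  have : CompactSpace L := isCompact_iff_compactSpace.1 hL
  have hcont : ∀ x : X, Continuous fun q : L => (q : WeakDual ℝ X) x := fun x =>
    (WeakDual.eval_continuous x).comp continuous_subtype_val
  let S := {P : 𝔰.Γ × Set X // P.2.Countable ∧ t₀ ≤ P.1 ∧
    ∀ q : L, (∀ x ∈ P.2, (q : WeakDual ℝ X) x = 0) → 𝔰.r P.1 q = o}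
  have hstep : ∀ P : S, ∃ P' : S, ∃ d : L, ∃ b < ⊤, P.1.1 < P'.1.1 ∧ P.1.2 ⊆ P'.1.2 ∧
      (∀ x ∈ P.1.2, (d : WeakDual ℝ X) x = 0) ∧ (d : WeakDual ℝ X) ∈ arcHull g δ b ∧
      𝔰.r P'.1.1 d = d := by
    rintro ⟨⟨s, A⟩, hA, hs, hsA⟩
    obtain ⟨x, b, hb, z, hzK, hzA, hpeak⟩ := exists_peak hω hg hg0 hne hρ hbd hδ hA
    obtain ⟨w, hw⟩ := (((hA.insert x).insert y₀).insert x₀).exists_eq_range (insert_nonempty _ _)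
    obtain ⟨s₁, hs₁⟩ := hno s
    obtain ⟨t, ht, hteq⟩ := 𝔰.exists_ge_eval_eq hno (fun i (q : L) => (q : WeakDual ℝ X) (w i))
      (fun i => hcont (w i)) ⟨z, hKL hzK⟩ s₁
    have hval : ∀ a ∈ insert x₀ (insert y₀ (insert x A)),
        ((𝔰.r t ⟨z, hKL hzK⟩ : L) : WeakDual ℝ X) a = z a := by
      intro a ha
      rw [hw] at ha
      obtain ⟨i, rfl⟩ := ha
      exact hteq i
    have hdA : ∀ a ∈ A, ((𝔰.r t ⟨z, hKL hzK⟩ : L) : WeakDual ℝ X) a = 0 := fun a ha => by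
      rw [hval a (by simp [ha]), hzA a ha]
    have hst : s < t := hs₁.trans_le ht
    obtain ⟨A', hA', hann⟩ := exists_countable_annihilator 𝔰 o ho t (ht₀ t (hs.trans hst.le))
    refine ⟨⟨(t, A ∪ A'), hA.union hA', hs.trans hst.le,
      fun q hq => hann q fun a ha => hq a (Or.inr ha)⟩, 𝔰.r t ⟨z, hKL hzK⟩, b, hb, hst,
      subset_union_left, hdA, ?_, 𝔰.isRetraction t _⟩
    refine hpeak _ (hLK _ (Subtype.coe_prop _) ?_ ?_) hdA (hval x (by simp))
    · rw [hval x₀ (by simp), hx₀ z hzK]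
    · rw [hval y₀ (by simp), hy₀ z hzK]
  choose F d b hb hlt hsub hann hmem hfix using hstep
  obtain ⟨A₀, hA₀, hann₀⟩ := exists_countable_annihilator 𝔰 o ho t₀ (ht₀ t₀ le_rfl)
  let P : ℕ → S := fun n => Nat.rec ⟨(t₀, A₀), hA₀, le_rfl, hann₀⟩ (fun _ p => F p) n
  have hmono : StrictMono fun n => (P n).1.1 := strictMono_nat_of_lt_succ fun n => hlt (P n)
  have hAmono : Monotone fun n => (P n).1.2 := monotone_nat_of_le_succ fun n => hsub (P n)
  obtain ⟨t, ht, hlim⟩ := 𝔰.sup_seq _ hmono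
  obtain ⟨γ, hγ, hbγ⟩ := hω (fun n => b (P n)) fun n => hb (P n)
  let U : Ultrafilter ℕ := hyperfilter ℕ
  have hU : (U : Filter ℕ) ≤ atTop := Nat.hyperfilter_le_atTop
  let D : L := (U.map fun n => d (P n)).lim
  have hD : Tendsto (fun n => d (P n)) U (𝓝 D) := (U.map fun n => d (P n)).le_nhds_lim
  have hDmem : (D : WeakDual ℝ X) ∈ arcHull g δ γ :=
    isClosed_arcHull.mem_of_tendsto ((continuous_subtype_val.tendsto D).comp hD)
      (Eventually.of_forall fun n => arcHull_mono le_rfl (hbγ n).le (hmem (P n)))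
  have hDann : ∀ m, ∀ x ∈ (P m).1.2, (D : WeakDual ℝ X) x = 0 := by
    intro m x hx
    refine tendsto_nhds_unique (((hcont x).tendsto D).comp hD)
      (tendsto_const_nhds.congr' ?_)
    filter_upwards [hU (eventually_ge_atTop m)] with n hn
    exact (hann (P n) x (hAmono hn hx)).symm
  have htd : ∀ n, 𝔰.r t (d (P n)) = d (P n) := by
    intro n
    have h := (𝔰.comp_eq_of_le _ _ (ht.1 ⟨n + 1, rfl⟩) (d (P n))).2
    have h' : 𝔰.r (P (n + 1)).1.1 (d (P n)) = d (P n) := hfix (P n)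
    simpa only [h'] using h
  have htD : 𝔰.r t D = D :=
    tendsto_nhds_unique ((((𝔰.r t).continuous.tendsto D).comp hD).congr htd) hD
  have htD0 : 𝔰.r t D = o :=
    tendsto_nhds_unique (hlim D)
      (tendsto_const_nhds.congr fun n => ((P n).2.2.2 D (hDann n)).symm)
  refine hδ0 γ hγ ?_
  rw [← ho, ← htD0, htD]
  exact hDmem

/-- The linear form `2 a₀ a - b` attains its maximum over the convex hull of the region
`a² ≤ b` with the origin only at `(a₀, a₀²)`. -/
lemma parabola_exposed {a₀ a b β : ℝ} (ha₀ : 0 < a₀) (hab : a ^ 2 ≤ b) (hβ : 0 ≤ β) (hβ1 : β ≤ 1)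
    (h : 2 * a₀ * (β * a) - β * b = a₀ ^ 2) : β = 1 ∧ a = a₀ ∧ b = a₀ ^ 2 := by
  have hle : 2 * a₀ * a - b ≤ a₀ ^ 2 := by nlinarith [sq_nonneg (a - a₀)]
  have hpos : 0 < a₀ ^ 2 := by positivity
  have hval : β * (2 * a₀ * a - b) = a₀ ^ 2 := by rw [← h]; ring
  have hβ' : β = 1 := by
    have h1 : β * (2 * a₀ * a - b) ≤ β * a₀ ^ 2 := mul_le_mul_of_nonneg_left hle hβ
    have h2 : 1 * a₀ ^ 2 ≤ β * a₀ ^ 2 := by linarith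
    exact le_antisymm hβ1 (le_of_mul_le_mul_right h2 hpos)
  rw [hβ', one_mul] at hval
  have haa : a - a₀ = 0 := by
    have : (a - a₀) ^ 2 ≤ 0 := by nlinarith
    exact (pow_eq_zero_iff two_ne_zero).1 (le_antisymm this (sq_nonneg _))
  have haa' : a = a₀ := by linarith
  refine ⟨hβ', haa', ?_⟩
  rw [haa'] at hval
  linarith

/-- The main construction, for an abstract long interval `T` in place of `[0, ω₁]`. The set `L` is
the convex hull of `K = arcHull g δ ⊤` and the parabolic region
`C = {a p + b q : a² ≤ b ≤ 1}`, where `x, y` are biorthogonal to `p, q` and vanish on `K`. The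
points `a p + a² q` are exposed in `L` by `2 a x - y`, hence fixed by retractions, and they
converge to `0`. -/
lemma exists_set_without_skeleton [WellFoundedLT T] [Nontrivial T]
    (hω : ∀ w : ℕ → T, (∀ n, w n < ⊤) → ∃ b < ⊤, ∀ n, w n < b)
    (hg : Continuous g) (hg0 : g ⊤ = 0) (hne : ∀ ξ < ⊤, g ξ ≠ 0)
    {ε : ℝ} (hε : 0 < ε) (hbd : ∀ ξ x, |g ξ x| ≤ (ε / 2) * ‖x‖) (e : X) :
    ∃ L : Set (WeakDual ℝ X), IsCompact L ∧ Convex ℝ L ∧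
      (∀ φ ∈ L, φ e = 0 ∧ ∀ x : X, |φ x| ≤ ε * ‖x‖) ∧ ¬ HasRetractionalSkeleton L := by
  have hρ : 0 ≤ ε / 2 := by positivity
  obtain ⟨i, hi⟩ : ∃ i : T, i < ⊤ := by
    obtain ⟨i, hi⟩ := exists_ne (⊤ : T)
    exact ⟨i, hi.lt_top⟩
  have hone : ∀ ξ < ⊤, ∃ x, g ξ x = 1 := by
    intro ξ hξ
    obtain ⟨x, hx⟩ : ∃ x, g ξ x ≠ 0 := by
      by_contra! h
      exact hne ξ hξ (DFunLike.ext _ _ h)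
    exact ⟨(g ξ x)⁻¹ • x, by rw [map_smul, smul_eq_mul, inv_mul_cancel₀ hx]⟩
  obtain ⟨i₁, hi₁, -, hv₁⟩ := exists_tail_vanish hω hg hg0 (countable_singleton e) hi
  obtain ⟨x, hpx⟩ := hone i₁ hi₁
  obtain ⟨i₂, hi₂, hi₁₂, hv₂⟩ := exists_tail_vanish hω hg hg0 (countable_singleton x) hi₁
  obtain ⟨y', hqy'⟩ := hone i₂ hi₂
  have hqx : g i₂ x = 0 := hv₂ i₂ le_rfl x rfl
  obtain ⟨y, hpy, hqy⟩ : ∃ y, g i₁ y = 0 ∧ g i₂ y = 1 := by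
    refine ⟨y' - (g i₁ y') • x, ?_, ?_⟩
    · rw [map_sub, map_smul, hpx, smul_eq_mul, mul_one, sub_self]
    · rw [map_sub, map_smul, hqx, hqy', smul_zero, sub_zero]
  obtain ⟨i₃, hi₃, hi₂₃, hv₃⟩ := exists_tail_vanish hω hg hg0 (countable_singleton y) hi₂
  obtain ⟨δ, hδ, hiδ, hδ0⟩ := exists_arcHull_not_mem hω hg hne hi₃
  set p := g i₁ with hp
  set q := g i₂ with hq
  have hpe : p e = 0 := hv₁ i₁ le_rfl e rfl
  have hqe : q e = 0 := hv₁ i₂ hi₁₂ e rfl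
  let K := arcHull g δ ⊤
  have hKx : ∀ k ∈ K, k x = 0 := fun k hk =>
    arcHull_apply_eq (fun ξ hξ => hv₂ ξ ((hi₂₃.trans hiδ).trans hξ.1) x rfl) hk
  have hKy : ∀ k ∈ K, k y = 0 := fun k hk =>
    arcHull_apply_eq (fun ξ hξ => hv₃ ξ (hiδ.trans hξ.1) y rfl) hk
  have hKe : ∀ k ∈ K, k e = 0 := fun k hk =>
    arcHull_apply_eq (fun ξ hξ =>
      hv₁ ξ ((hi₁₂.trans (hi₂₃.trans hiδ)).trans hξ.1) e rfl) hk
  have h0K : (0 : WeakDual ℝ X) ∈ K := hg0 ▸ mem_arcHull ⟨le_top, le_rfl⟩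
  let B : Set (ℝ × ℝ) := {c | c.1 ^ 2 ≤ c.2 ∧ c.2 ≤ 1}
  let Φ : ℝ × ℝ → WeakDual ℝ X := fun c => c.1 • p + c.2 • q
  have hΦ : ∀ c v, Φ c v = c.1 * p v + c.2 * q v := fun _ _ => rfl
  have hBabs : ∀ c ∈ B, |c.1| ≤ 1 ∧ |c.2| ≤ 1 := by
    rintro ⟨a, b⟩ ⟨h1, h2⟩
    dsimp only at h1 h2 ⊢
    exact ⟨abs_le_one_iff_mul_self_le_one.2 (by nlinarith), abs_le.2 ⟨by nlinarith, h2⟩⟩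
  have hBcomp : IsCompact B := by
    refine (isCompact_Icc.prod isCompact_Icc : IsCompact
      (Icc (-1 : ℝ) 1 ×ˢ Icc (-1 : ℝ) 1)).of_isClosed_subset ?_ fun c hc => ?_
    · exact (isClosed_le (continuous_fst.pow 2) continuous_snd).inter
        (isClosed_le continuous_snd continuous_const)
    · exact ⟨abs_le.1 (hBabs c hc).1, abs_le.1 (hBabs c hc).2⟩
  let C := Φ '' B
  have hCcomp : IsCompact C := hBcomp.image (by fun_prop)
  have hCconv : Convex ℝ C := by
    rintro _ ⟨⟨a, b⟩, ⟨hab1, hab2⟩, rfl⟩ _ ⟨⟨a', b'⟩, ⟨hab1', hab2'⟩, rfl⟩ α β hα hβ hαβ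
    dsimp only at hab1 hab2 hab1' hab2'
    refine ⟨(α * a + β * a', α * b + β * b'), ⟨?_, ?_⟩, ?_⟩
    · have hβ' : β = 1 - α := by linarith
      subst hβ'
      change (α * a + (1 - α) * a') ^ 2 ≤ α * b + (1 - α) * b'
      nlinarith [mul_nonneg (mul_nonneg hα hβ) (sq_nonneg (a - a')),
        mul_le_mul_of_nonneg_left hab1 hα, mul_le_mul_of_nonneg_left hab1' hβ]
    · change α * b + β * b' ≤ 1
      nlinarith
    · refine DFunLike.ext _ _ fun v => ?_
      change (α * a + β * a') * p v + (α * b + β * b') * q v =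
        α * (a * p v + b * q v) + β * (a' * p v + b' * q v)
      ring
  have hCmem : ∀ c ∈ B, Φ c ∈ C := fun c hc => ⟨c, hc, rfl⟩
  let L := convexJoin ℝ K C
  have hKL : K ⊆ L := subset_convexJoin_left ⟨Φ 0, 0, by simp [B], rfl⟩
  have hCL : C ⊆ L := subset_convexJoin_right ⟨0, h0K⟩
  have hLcomp : IsCompact L := isCompact_convexJoin (isCompact_arcHull hρ hbd δ ⊤) hCcomp
  have hLconv : Convex ℝ L := convex_arcHull.convexJoin hCconv
  have hLball : L ⊆ {φ : WeakDual ℝ X | φ e = 0} ∩ {φ | ∀ v, |φ v| ≤ ε * ‖v‖} := by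
    refine convexJoin_subset (fun k hk => ⟨hKe k hk, fun v => ?_⟩) ?_ ?_
    · have := arcHull_subset_ball hρ hbd δ ⊤ hk v
      nlinarith [norm_nonneg v]
    · rintro _ ⟨c, hc, rfl⟩
      refine ⟨?_, fun v => ?_⟩
      · change c.1 * p e + c.2 * q e = 0
        rw [hpe, hqe, mul_zero, mul_zero, add_zero]
      · rw [hΦ]
        obtain ⟨h1, h2⟩ := hBabs c hc
        calc |c.1 * p v + c.2 * q v| ≤ |c.1 * p v| + |c.2 * q v| := abs_add_le _ _
          _ = |c.1| * |p v| + |c.2| * |q v| := by rw [abs_mul, abs_mul]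
          _ ≤ 1 * (ε / 2 * ‖v‖) + 1 * (ε / 2 * ‖v‖) := by
              gcongr
              exacts [hbd i₁ v, hbd i₂ v]
          _ = ε * ‖v‖ := by ring
    · refine Convex.inter ?_ (convex_dualBall_smul ε)
      intro φ hφ ψ hψ α β _ _ _
      change α * φ e + β * ψ e = 0
      rw [show φ e = 0 from hφ, show ψ e = 0 from hψ, mul_zero, mul_zero, add_zero]
  -- coordinates of a point of `L`
  have hLrep : ∀ φ ∈ L, ∃ k ∈ K, ∃ a b α β : ℝ, a ^ 2 ≤ b ∧ b ≤ 1 ∧ 0 ≤ α ∧ 0 ≤ β ∧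
      α + β = 1 ∧ φ = α • k + β • Φ (a, b) ∧ φ x = β * a ∧ φ y = β * b := by
    intro φ hφ
    obtain ⟨k, hk, _, ⟨⟨a, b⟩, ⟨h1, h2⟩, rfl⟩, α, β, hα, hβ, hαβ, rfl⟩ := mem_convexJoin.1 hφ
    refine ⟨k, hk, a, b, α, β, h1, h2, hα, hβ, hαβ, rfl, ?_, ?_⟩
    · change α * k x + β * (a * p x + b * q x) = _
      rw [hKx k hk, hpx, hqx]; ring
    · change α * k y + β * (a * p y + b * q y) = _
      rw [hKy k hk, hpy, hqy]; ring
  have hLK : ∀ φ ∈ L, φ x = 0 → φ y = 0 → φ ∈ K := by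
    intro φ hφ hφx hφy
    obtain ⟨k, hk, a, b, α, β, -, -, hα, hβ, hαβ, heq, hx, hy⟩ := hLrep φ hφ
    have hz : φ = α • k + β • (0 : WeakDual ℝ X) := by
      rw [heq]
      congr 1
      refine DFunLike.ext _ _ fun v => ?_
      change β * (a * p v + b * q v) = β * 0
      rw [mul_add, ← mul_assoc, ← mul_assoc, ← hx, ← hy, hφx, hφy]
      ring
    rw [hz]
    exact convex_arcHull hk h0K hα hβ hαβ
  have hexp : ∀ a₀ : ℝ, 0 < a₀ → ∀ φ ∈ L, φ ((2 * a₀) • x - y) = a₀ ^ 2 → φ = Φ (a₀, a₀ ^ 2) := by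
    intro a₀ ha₀ φ hφ hval
    obtain ⟨k, hk, a, b, α, β, hab, hb, hα, hβ, hαβ, heq, hx, hy⟩ := hLrep φ hφ
    rw [map_sub, map_smul, smul_eq_mul, hx, hy] at hval
    obtain ⟨hβ1, haa, hbb⟩ := parabola_exposed ha₀ hab hβ (by linarith) hval
    have hα0 : α = 0 := by linarith
    rw [heq, hα0, hβ1, haa, hbb, zero_smul, zero_add, one_smul]
  refine ⟨L, hLcomp, hLconv, fun φ hφ => hLball hφ, ?_⟩
  rintro ⟨𝔰⟩
  let o : L := ⟨0, hKL h0K⟩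
  -- a retraction fixing `0` also collapses some `g ξ ≠ 0`, so it is not the identity
  have hnotid : ∀ s : 𝔰.Γ, ¬ ∀ z, 𝔰.r s z = z := by
    intro s hs
    obtain ⟨A, hA, hann⟩ := exists_countable_annihilator 𝔰 o rfl s (hs o)
    obtain ⟨b, hb, hδb, hvan⟩ := exists_tail_vanish hω hg hg0 hA hδ
    have h := hann ⟨g b, hKL (mem_arcHull ⟨hδb, le_top⟩)⟩ (hvan b le_rfl)
    rw [hs] at h
    exact hne b hb (congrArg Subtype.val h)
  have hno : ∀ s : 𝔰.Γ, ∃ s', s < s' := fun s =>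
    (𝔰.exists_gt_or_eq_id s).resolve_right (hnotid s)
  let a : ℕ → ℝ := fun n => 1 / ((n : ℝ) + 1)
  have ha : ∀ n, 0 < a n := fun n => Nat.one_div_pos_of_nat
  have ha1 : ∀ n, a n ≤ 1 := fun n => by
    rw [div_le_one (by positivity)]
    linarith [n.cast_nonneg (α := ℝ)]
  let z : ℕ → L := fun n => ⟨Φ (a n, a n ^ 2), hCL (hCmem _ ⟨le_rfl, pow_le_one₀ (ha n).le (ha1 n)⟩)⟩
  have hzlim : Tendsto z atTop (𝓝 o) := by
    rw [tendsto_subtype_rng]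
    have hc : Continuous fun c : ℝ => Φ (c, c ^ 2) := by fun_prop
    have := (hc.tendsto 0).comp tendsto_one_div_add_atTop_nhds_zero_nat
    have h0 : Φ (0, 0 ^ 2) = 0 := by simp [Φ]
    rw [h0] at this
    exact this
  have hzfix : ∀ n, ∃ s, 𝔰.r s (z n) = z n := by
    intro n
    obtain ⟨t, -, ht⟩ := 𝔰.exists_ge_eval_eq hno
      (fun _ (φ : L) => (φ : WeakDual ℝ X) ((2 * a n) • x - y))
      (fun _ => (WeakDual.eval_continuous _).comp continuous_subtype_val) (z n)
      (Classical.arbitrary _)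
    refine ⟨t, Subtype.ext (hexp (a n) (ha n) _ (Subtype.coe_prop _) ((ht 0).trans ?_))⟩
    change Φ (a n, a n ^ 2) _ = _
    rw [hΦ, map_sub, map_sub, map_smul, map_smul, hpx, hpy, hqx, hqy]
    simp only [smul_eq_mul]
    ring
  obtain ⟨t₀, ht₀⟩ := 𝔰.exists_fixes_limit hno z o hzfix hzlim
  exact false_of_fixes_zero hω hg hg0 hne hρ hbd hδ hδ0 hLcomp hKL x y hLK hKx hKy 𝔰 hno o rfl
    t₀ ht₀

end LongLine

/-- If `[0, ω₁]` embeds homeomorphically into `(B_{X*}, w*)`, then for every `e ∈ X` and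
`ε > 0` there exists a weak*-compact convex set
`L ⊆ {x* : x*(e) = 0} ∩ ε B_{X*}` without a retractional skeleton. -/
theorem exists_compact_convex_without_retractionalSkeleton (X : Type u)
    [NormedAddCommGroup X] [NormedSpace ℝ X] [CompleteSpace X]
    (hemb : ∃ f : OrdinalSegmentOmega1 → ↥(dualBall X), Topology.IsEmbedding f)
    (e : X) (ε : ℝ) (hε : 0 < ε) :
    ∃ L : Set (WeakDual ℝ X), IsCompact L ∧ Convex ℝ L ∧
      (∀ φ ∈ L, φ e = 0 ∧ ∀ x : X, |φ x| ≤ ε * ‖x‖) ∧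
      ¬ HasRetractionalSkeleton ↥L := by
  obtain ⟨f, hf⟩ := hemb
  have : OrderTopology OrdinalSegmentOmega1 := orderTopology_of_ordConnected
  have : Nontrivial OrdinalSegmentOmega1 := by
    refine ⟨⟨⟨0, mem_Iic.2 zero_le⟩, ⊤, fun h => ?_⟩⟩
    have h0 : (0 : Ordinal) = omega1 := congrArg Subtype.val h
    exact (Ordinal.omega_pos 1).ne (h0.trans (Cardinal.ord_aleph 1))
  have hω : ∀ w : ℕ → OrdinalSegmentOmega1, (∀ n, w n < ⊤) → ∃ b < ⊤, ∀ n, w n < b := by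
    intro w hw
    have hlim : ∀ n, Order.succ (w n).1 < Ordinal.omega 1 := fun n =>
      lt_of_lt_of_eq ((Cardinal.isSuccLimit_ord (Cardinal.aleph0_le_aleph 1)).succ_lt (hw n))
        (Cardinal.ord_aleph 1)
    have hsup : ⨆ n, Order.succ (w n).1 < omega1 := by
      refine lt_of_lt_of_eq ?_ (Cardinal.ord_aleph 1).symm
      exact Ordinal.iSup_lt_omega_one hlim
    exact ⟨⟨_, hsup.le⟩, hsup, fun n =>
      (Order.lt_succ (w n).1).trans_le (Ordinal.le_iSup (fun n => Order.succ (w n).1) n)⟩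
  let g : OrdinalSegmentOmega1 → WeakDual ℝ X := fun ξ =>
    (ε / 4) • ((f ξ : WeakDual ℝ X) - (f ⊤ : WeakDual ℝ X))
  have hg : Continuous g :=
    ((continuous_subtype_val.comp hf.continuous).sub continuous_const).const_smul (ε / 4)
  refine exists_set_without_skeleton (g := g) hω hg (by simp [g]) ?_ hε ?_ e
  · intro ξ hξ h0
    refine hξ.ne (hf.injective (Subtype.ext (sub_eq_zero.1 ?_)))
    exact (smul_eq_zero.1 h0).resolve_left (by positivity)
  · intro ξ x
    have h1 := (f ξ).2 x
    have h2 := (f ⊤).2 x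
    change |ε / 4 * ((f ξ : WeakDual ℝ X) x - (f ⊤ : WeakDual ℝ X) x)| ≤ _
    rw [abs_mul, abs_of_pos (by positivity)]
    calc _ ≤ ε / 4 * (‖x‖ + ‖x‖) := by
          gcongr
          exact (abs_sub _ _).trans (add_le_add h1 h2)
      _ = ε / 2 * ‖x‖ := by ring
end

section
/- Let (X, ‖·‖) be a Banach space such that the ordinal interval [0,ω₁] embeds homeomorphically into (B_{X*}, w*). Then for any ε ∈ (0,1) there is an equivalent norm |||·||| on X such that (1−ε)|||·||| ≤ ‖·‖ ≤ |||·||| and the dual unit ball of (X, |||·|||), equipped with the weak* topology, does not have a retractional skeleton. -/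
/-!
Translating the embedded copy of `[0, ω₁]` so that its last point becomes `0` gives a weak*
continuous chain of functionals `y α`, nonzero for `α < ω₁` and zero at `ω₁`. Each vector kills
`y α` for all large `α`, so a tail of the chain vanishes at prescribed vectors `x₀`, `x₁`, and a
pressing-down argument (`exists_positive`) gives bounded vectors `w l` with `y α (w l) ≥ 1 / 2` for
all `α ≤ l`. Let `a`, `b` be biorthogonal to `x₀`, `x₁`. The dual ball of the new norm
(`RenormingData.N`) is the weak* closed absolutely convex hull of the old ball, the circle
`cos θ • a + sin θ • b` and the points `a + y α`; small `y α`, `b` and `‖a‖` slightly above `1` keep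
the distortion within the prescribed bound.

Suppose that this ball has a retractional skeleton `r`.

* The points of the circle close to `a`, other than `a` itself, are weak* exposed
  (`RenormingData.exposed`). They are therefore `G_δ` points and fixed by large retractions. Hence
  so is their limit `a` (`RetractionalSkeleton.exists_fix_limit`).
* The face of the ball exposed by `x₀` consists of points `a + (mean of the y α)`, by Hahn–Banach
  (`RenormingData.face_le`, `exists_mean`). By the positivity at `w l`, each point of this face that
  is not too close to `a` exceeds `a` at all `w l`, for `l < ω₁` large, by a fixed constant
  (`RenormingData.large_of_face`).
* The face is a `G_δ` set, so `r t (a + y α)` belongs to it for suitable large `t`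
  (`RetractionalSkeleton.exists_level`), while `r s (a + y α) = r s a = a` for `s` given and `α`
  large, since the range of `r s` is metrizable. Alternating the two choices gives `t 0 < t 1 < ⋯`
  and points `u n` of the face fixed by `r (t (n + 1))` with `r (t n) (u n) = a`. A cluster point of
  `u` is fixed by `r (sup t)` and mapped to `a` by it, hence equals `a`; but by the previous item it
  exceeds `a` at `w l` for `l` large (`RetractionalSkeleton.false_of_chain`).
-/

open Filter Topology TopologicalSpace Set

universe u v

/-- A projectional skeleton in a normed space `X`: a family of bounded linear projections
indexed by an up-directed (nonempty) partially ordered set `Γ` such that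
(i) `X = ⋃ s, P s [X]` and each `P s [X]` is separable;
(ii) `s ≤ t` implies `P s ∘ P t = P t ∘ P s = P s`;
(iii) each strictly increasing sequence has a supremum `t` with
`P t [X] = closure (⋃ n, P (f n) [X])`. -/
structure ProjectionalSkeleton (X : Type u) [NormedAddCommGroup X] [NormedSpace ℝ X] :
    Type (u + 1) where
  Γ : Type u
  [po : PartialOrder Γ]
  [ne : Nonempty Γ]
  directed : ∀ s t : Γ, ∃ w, s ≤ w ∧ t ≤ w
  P : Γ → X →L[ℝ] X
  idem : ∀ s, ∀ x : X, P s (P s x) = P s x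
  separable : ∀ s, IsSeparable (Set.range (P s))
  covers : ∀ x : X, ∃ s, x ∈ Set.range (P s)
  comp_eq_of_le : ∀ s t : Γ, s ≤ t → ∀ x : X, P s (P t x) = P s x ∧ P t (P s x) = P s x
  sup_seq : ∀ f : ℕ → Γ, StrictMono f → ∃ t : Γ, IsLUB (Set.range f) t ∧
    (Set.range (P t) : Set X) = closure (⋃ n, Set.range (P (f n)))

/-- `X` has a 1-projectional skeleton: a projectional skeleton with `‖P s‖ ≤ 1` for all `s`. -/
def Has1ProjectionalSkeleton (X : Type u) [NormedAddCommGroup X] [NormedSpace ℝ X] : Prop :=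
  ∃ 𝔰 : ProjectionalSkeleton X, ∀ s, ‖𝔰.P s‖ ≤ 1

/-- `N` is a norm on `X` equivalent to the given norm `‖·‖`. -/
def IsEquivNorm {X : Type u} [NormedAddCommGroup X] [NormedSpace ℝ X] (N : X → ℝ) : Prop :=
  (∀ (a : ℝ) (x : X), N (a • x) = |a| * N x) ∧
  (∀ x y : X, N (x + y) ≤ N x + N y) ∧
  (∃ c C : ℝ, 0 < c ∧ ∀ x : X, c * ‖x‖ ≤ N x ∧ N x ≤ C * ‖x‖)

/-- The Banach space `(X, N)` has a 1-projectional skeleton: since an equivalent norm induces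
the same topology, this means a projectional skeleton whose projections satisfy
`N (P s x) ≤ N x`, i.e. have norm at most `1` with respect to `N`. -/
def Has1ProjectionalSkeletonWrt {X : Type u} [NormedAddCommGroup X] [NormedSpace ℝ X]
    (N : X → ℝ) : Prop :=
  ∃ 𝔰 : ProjectionalSkeleton X, ∀ s, ∀ x : X, N (𝔰.P s x) ≤ N x

/-- The closed unit ball of the dual of `(X, N)`, as a subset of the weak* dual. -/
def dualBallWrt {X : Type u} [NormedAddCommGroup X] [NormedSpace ℝ X] (N : X → ℝ) :
    Set (WeakDual ℝ X) :=
  {φ | ∀ x : X, |φ x| ≤ N x}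

/-! ### Countable ordinals -/

lemma omega1_eq : omega1 = Ordinal.omega 1 := by
  simp [omega1]

lemma iSup_lt_omega1 (f : ℕ → Ordinal.{0}) (hf : ∀ n, f n < omega1) : ⨆ n, f n < omega1 := by
  rw [omega1_eq] at *
  exact Ordinal.iSup_lt_omega_one hf

lemma succ_lt_omega1 {α : Ordinal.{0}} (h : α < omega1) : Order.succ α < omega1 := by
  exact (Cardinal.isSuccLimit_ord (Cardinal.aleph0_le_aleph 1)).succ_lt h

lemma omega1_pos : (0 : Ordinal.{0}) < omega1 := by
  rw [omega1_eq]
  exact Ordinal.omega_pos 1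

/-- A function on the ordinals that is continuous at `ω₁` takes the value at `ω₁` on a whole
interval below `ω₁`, because countable sets of countable ordinals are bounded. -/
lemma eventually_const {M : Type*} [TopologicalSpace M] [T1Space M] [FirstCountableTopology M]
    (g : Ordinal.{0} → M) (hg : ContinuousAt g omega1) :
    ∃ β < omega1, ∀ α, β ≤ α → α ≤ omega1 → g α = g omega1 := by
  obtain ⟨U, hU⟩ := (𝓝 (g omega1)).exists_antitone_basis
  have h : ∀ n, ∃ β < omega1, Set.Ioc β omega1 ⊆ g ⁻¹' (U n) := fun n =>
    exists_Ioc_subset_of_mem_nhds (hg (hU.1.mem_of_mem trivial)) ⟨0, omega1_pos⟩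
  choose β hβ hsub using h
  refine ⟨Order.succ (⨆ n, β n), succ_lt_omega1 (iSup_lt_omega1 β hβ), fun α h1 h2 => ?_⟩
  have hlt : ∀ n, β n < α := fun n =>
    (le_ciSup Ordinal.bddAbove_of_small n).trans_lt (Order.succ_le_iff.1 h1)
  by_contra hne
  have : {g α}ᶜ ∈ 𝓝 (g omega1) := isOpen_compl_singleton.mem_nhds fun h => hne h.symm
  obtain ⟨n, -, hn⟩ := hU.1.mem_iff.1 this
  exact hn (hsub n ⟨hlt n, h2⟩) rfl

/-- A pressing-down argument: if `P ζ n l` is monotone in `ζ` and `n`, antitone in `l`, and each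
`l ∈ (0, ω₁)` satisfies `P ζ n l` for some `ζ < l` and some `n`, then a single pair `(ζ, n)` works
for every `l < ω₁`. -/
lemma pressing_down (P : Ordinal.{0} → ℕ → Ordinal.{0} → Prop)
    (hmono : ∀ ζ ζ' n n' l l', ζ ≤ ζ' → n ≤ n' → l' ≤ l → P ζ n l → P ζ' n' l')
    (hreg : ∀ l, 0 < l → l < omega1 → ∃ ζ < l, ∃ n, P ζ n l) :
    ∃ ζ < omega1, ∃ n, ∀ l < omega1, P ζ n l := by
  by_contra! hcon
  have h : ∀ (ζ : Set.Iio omega1) (n : ℕ), ∃ l : Set.Iio omega1, ¬ P ζ n l := fun ζ n => by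
    obtain ⟨l, hl, hP⟩ := hcon ζ.1 ζ.2 n
    exact ⟨⟨l, hl⟩, hP⟩
  choose b hb using h
  let z : ℕ → Set.Iio omega1 := fun n => Nat.rec ⟨0, omega1_pos⟩
    (fun n ζ => ⟨Order.succ (max ζ.1 (b ζ n).1), succ_lt_omega1 (max_lt ζ.2 (b ζ n).2)⟩) n
  have hz : ∀ n, max (z n).1 (b (z n) n).1 < (z (n + 1)).1 := fun n => Order.lt_succ _
  have hle : ∀ n, (z n).1 ≤ ⨆ n, (z n).1 := fun n => le_ciSup Ordinal.bddAbove_of_small n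
  have hzm : Monotone fun n => (z n).1 :=
    monotone_nat_of_le_succ fun n => ((le_max_left _ _).trans_lt (hz n)).le
  have h0 : (0 : Ordinal) < ⨆ n, (z n).1 :=
    zero_le.trans_lt (((le_max_left _ _).trans_lt (hz 0)).trans_le (hle 1))
  obtain ⟨ζ, hζ, n, hP⟩ := hreg _ h0 (iSup_lt_omega1 _ fun n => (z n).2)
  obtain ⟨k, hk⟩ := exists_lt_of_lt_ciSup hζ
  refine hb (z (max k n)) (max k n) (hmono ζ _ n _ _ _
    (hk.le.trans (hzm (le_max_left k n))) (le_max_right _ _) ?_ hP)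
  exact ((le_max_right _ _).trans_lt (hz (max k n))).le.trans (hle (max k n + 1))

/-! ### Retractional skeletons -/

section Skeleton

variable {K : Type u} [TopologicalSpace K]

attribute [local instance] RetractionalSkeleton.po RetractionalSkeleton.ne

/-- The range of each `r s` is metrizable, so `r s ∘ e` is eventually constant along `[0, ω₁]`. -/
lemma RetractionalSkeleton.eventually_const (S : RetractionalSkeleton K) (s : S.Γ)
    (e : Ordinal.{0} → K) (he : Continuous e) :
    ∃ β < omega1, ∀ α, β ≤ α → α ≤ omega1 → S.r s (e α) = S.r s (e omega1) := by
  have := S.metrizable s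
  obtain ⟨β, hβ, h⟩ := _root_.eventually_const
    (fun α => (⟨S.r s (e α), Set.mem_range_self _⟩ : Set.range (S.r s)))
    (by fun_prop)
  exact ⟨β, hβ, fun α h1 h2 => congrArg Subtype.val (h α h1 h2)⟩

/-- If `K` contains a copy of `[0, ω₁]`, the index set has no maximal element: a maximal index
would be the greatest one, its retraction the identity, and `K` metrizable. -/
lemma RetractionalSkeleton.exists_gt [T2Space K] (S : RetractionalSkeleton K)
    (e : Ordinal.{0} → K) (he : Continuous e) (hne : ∀ α < omega1, e α ≠ e omega1) (s : S.Γ) :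
    ∃ t, s < t := by
  by_contra! hmax
  have htop : ∀ t, t ≤ s := fun t => by
    obtain ⟨w, h1, h2⟩ := S.directed s t
    have : s = w := by
      by_contra h
      exact hmax w (lt_of_le_of_ne h1 h)
    exact this ▸ h2
  have hid : ∀ x, S.r s x = x := fun x => by
    refine tendsto_nhds_unique (f := fun _ : Unit => S.r s x) (l := pure ())
      tendsto_const_nhds (?_ : Tendsto _ _ (𝓝 x))
    have hs : Tendsto (fun _ : Unit => s) (pure ()) atTop :=
      tendsto_atTop.2 fun t => by simpa using htop t
    exact (S.tendsto_id x).comp hs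
  obtain ⟨β, hβ, h⟩ := S.eventually_const s e he
  have := h β le_rfl hβ.le
  rw [hid, hid] at this
  exact hne β hβ this

/-- Level sets of continuous functions are closed `G_δ` sets, so the set induced by the skeleton
is dense in them; moreover the approximating points can be taken of the form `r t x` with `t`
arbitrarily large. -/
lemma RetractionalSkeleton.exists_level (S : RetractionalSkeleton K)
    (hgt : ∀ s : S.Γ, ∃ t, s < t) (g h : K → ℝ) (hg : Continuous g) (hh : Continuous h)
    (x : K) (κ : ℝ) (hx : κ < h x) (s : S.Γ) :
    ∃ t, s < t ∧ g (S.r t x) = g x ∧ κ ≤ h (S.r t x) := by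
  have : IsDirectedOrder S.Γ := ⟨fun a b => S.directed a b⟩
  have step : ∀ (n : ℕ) (s : S.Γ), ∃ t, s < t ∧ |g (S.r t x) - g x| < 1 / (n + 1) ∧
      κ < h (S.r t x) := fun n s => by
    have h1 : ∀ᶠ t in atTop, |g (S.r t x) - g x| < 1 / ((n : ℝ) + 1) := by
      have : Tendsto (fun t => |g (S.r t x) - g x|) atTop (𝓝 |g x - g x|) :=
        (((hg.tendsto x).comp (S.tendsto_id x)).sub_const _).abs
      rw [sub_self, abs_zero] at this
      exact this.eventually_lt_const (by positivity)
    have h2 : ∀ᶠ t in atTop, κ < h (S.r t x) :=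
      ((hh.tendsto x).comp (S.tendsto_id x)).eventually_const_lt hx
    obtain ⟨s', hs'⟩ := hgt s
    obtain ⟨t, ht1, ht2⟩ := ((h1.and h2).and (eventually_ge_atTop s')).exists
    exact ⟨t, hs'.trans_le ht2, ht1.1, ht1.2⟩
  choose f hf1 hf2 hf3 using step
  let q : ℕ → S.Γ := fun n => Nat.rec (f 0 s) (fun n t => f (n + 1) t) n
  have hq : StrictMono q := strictMono_nat_of_lt_succ fun n => hf1 _ _
  have hq2 : ∀ n, |g (S.r (q n) x) - g x| < 1 / ((n : ℝ) + 1) ∧ κ < h (S.r (q n) x) := by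
    intro n
    cases n with
    | zero => exact ⟨hf2 0 s, hf3 0 s⟩
    | succ n => exact ⟨hf2 (n + 1) (q n), hf3 (n + 1) (q n)⟩
  obtain ⟨t, ht, hlim⟩ := S.sup_seq q hq
  refine ⟨t, (hf1 0 s).trans_le (ht.1 ⟨0, rfl⟩), ?_, ?_⟩
  · refine tendsto_nhds_unique ((hg.tendsto _).comp (hlim x)) ?_
    rw [tendsto_iff_dist_tendsto_zero]
    exact squeeze_zero (fun _ => dist_nonneg) (fun n => (hq2 n).1.le)
      tendsto_one_div_add_atTop_nhds_zero_nat
  · exact ge_of_tendsto' ((hh.tendsto _).comp (hlim x)) fun n => (hq2 n).2.le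

/-- A limit of a sequence of points that are singled out by continuous functions (hence `G_δ`
points) is fixed by some retraction of the skeleton. -/
lemma RetractionalSkeleton.exists_fix_limit [T2Space K] (S : RetractionalSkeleton K)
    (hgt : ∀ s : S.Γ, ∃ t, s < t) (p : ℕ → K) (g : ℕ → K → ℝ) (hg : ∀ n, Continuous (g n))
    (hp : ∀ n k, g n k = g n (p n) → k = p n) (a : K) (hlim : Tendsto p atTop (𝓝 a)) :
    ∃ t, S.r t a = a := by
  have step : ∀ (n : ℕ) (s : S.Γ), ∃ t, s < t ∧ S.r t (p n) = p n := fun n s => by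
    obtain ⟨t, h1, h2, -⟩ := S.exists_level hgt (g n) (fun _ => 1) (hg n) continuous_const (p n) 0
      one_pos s
    exact ⟨t, h1, hp n _ h2⟩
  choose f hf1 hf2 using step
  obtain ⟨s⟩ := S.ne
  let q : ℕ → S.Γ := fun n => Nat.rec (f 0 s) (fun n t => f (n + 1) t) n
  have hq : StrictMono q := strictMono_nat_of_lt_succ fun n => hf1 _ _
  have hq2 : ∀ n, S.r (q n) (p n) = p n := by
    intro n
    cases n with
    | zero => exact hf2 0 s
    | succ n => exact hf2 (n + 1) (q n)
  obtain ⟨t, ht, -⟩ := S.sup_seq q hq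
  have hfix : ∀ n, S.r t (p n) = p n := fun n => by
    have := (S.comp_eq_of_le (q n) t (ht.1 ⟨n, rfl⟩) (p n)).2
    rwa [hq2] at this
  refine ⟨t, tendsto_nhds_unique (((S.r t).continuous.tendsto a).comp hlim) ?_⟩
  simpa [Function.comp_def, hfix] using hlim

/-- The contradiction scheme. Let `a` be fixed by a retraction, let `e` be an `ω₁`-chain converging
to `a`, and let `e α` be approximable (by continuous data `g`, `h α` as in `exists_level`) only by
points `ψ` with `h l ψ ≥ c` for all large `l < ω₁`, whereas `h l a < c` for all `l < ω₁`. Then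
`K` has no retractional skeleton: a cluster point of `r (t (n+1)) (e (α n))`, for rapidly
increasing `t n` and `α n`, is fixed by `r (sup t n)` and mapped to `a` by it. -/
lemma RetractionalSkeleton.false_of_chain [CompactSpace K] [T2Space K]
    (S : RetractionalSkeleton K) (hgt : ∀ s : S.Γ, ∃ t, s < t)
    (e : Ordinal.{0} → K) (he : Continuous e) (s₀ : S.Γ) (ha : S.r s₀ (e omega1) = e omega1)
    (g : K → ℝ) (h : Ordinal.{0} → K → ℝ) (hg : Continuous g) (hh : ∀ α, Continuous (h α))
    (κ c : ℝ) (hκ : ∀ α < omega1, κ < h α (e α))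
    (hlarge : ∀ ψ : K, ∀ α < omega1, g ψ = g (e α) → κ ≤ h α ψ →
      ∃ l₀ < omega1, ∀ l < omega1, l₀ ≤ l → c ≤ h l ψ)
    (hsmall : ∀ l < omega1, h l (e omega1) < c) : False := by
  set a := e omega1 with ha_def
  have hfix : ∀ s : S.Γ, s₀ ≤ s → S.r s a = a := fun s hs => by
    have := (S.comp_eq_of_le s₀ s hs a).2
    rwa [ha] at this
  have step : ∀ s : {s : S.Γ // s₀ ≤ s}, ∃ t : {s : S.Γ // s₀ ≤ s}, ∃ ψ : K, ∃ l₀ < omega1,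
      s.1 < t.1 ∧ S.r t.1 ψ = ψ ∧ S.r s.1 ψ = a ∧ ∀ l < omega1, l₀ ≤ l → c ≤ h l ψ := by
    rintro ⟨s, hs⟩
    obtain ⟨α, hα, hconst⟩ := S.eventually_const s e he
    obtain ⟨t, hst, h1, h2⟩ := S.exists_level hgt g (h α) hg (hh α) (e α) κ (hκ α hα) s
    obtain ⟨l₀, hl₀, hl⟩ := hlarge _ α hα h1 h2
    refine ⟨⟨t, hs.trans hst.le⟩, S.r t (e α), l₀, hl₀, hst, S.isRetraction t _, ?_, hl⟩
    change S.r s (S.r t (e α)) = a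
    rw [(S.comp_eq_of_le s t hst.le _).1, hconst α le_rfl hα.le]
    exact hfix s hs
  choose f ψ l hl hlt hψ1 hψ2 hψ3 using step
  let q : ℕ → {s : S.Γ // s₀ ≤ s} := fun n => Nat.rec ⟨s₀, le_rfl⟩ (fun _ t => f t) n
  have hq : StrictMono fun n => (q n).1 := strictMono_nat_of_lt_succ fun n => hlt _
  obtain ⟨t, ht, hlim⟩ := S.sup_seq _ hq
  let u : ℕ → K := fun n => ψ (q n)
  -- a cluster point of the sequence `u`
  let 𝓕 : Ultrafilter K := (hyperfilter ℕ).map u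
  have hφ : Tendsto u (hyperfilter ℕ : Filter ℕ) (𝓝 𝓕.lim) := 𝓕.le_nhds_lim
  set φ := 𝓕.lim
  have hfixt : ∀ n, S.r t (u n) = u n := fun n => by
    have := (S.comp_eq_of_le (q (n + 1)).1 t (ht.1 ⟨n + 1, rfl⟩) (u n)).2
    rwa [show S.r (q (n + 1)).1 (u n) = u n from hψ1 (q n)] at this
  have h1 : S.r t φ = φ := by
    refine tendsto_nhds_unique (((S.r t).continuous.tendsto φ).comp hφ) ?_
    simpa [Function.comp_def, hfixt] using hφ
  have h2 : ∀ k, S.r (q k).1 φ = a := fun k => by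
    refine tendsto_nhds_unique (((S.r (q k).1).continuous.tendsto φ).comp hφ) ?_
    refine tendsto_const_nhds.congr' ?_
    have : ∀ᶠ n in (hyperfilter ℕ : Filter ℕ), k ≤ n :=
      Nat.hyperfilter_le_atTop (eventually_ge_atTop k)
    filter_upwards [this] with n hn
    have h3 := (S.comp_eq_of_le (q k).1 (q n).1 (hq.monotone hn) (u n)).1
    rw [show S.r (q n).1 (u n) = a from hψ2 (q n), hfix _ (q k).2] at h3
    exact h3
  have h3 : φ = a := by
    rw [← h1]
    refine tendsto_nhds_unique (hlim φ) ?_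
    simp [h2]
  have hL := iSup_lt_omega1 (fun n => l (q n)) fun n => hl _
  have h4 : c ≤ h (⨆ n, l (q n)) φ :=
    ge_of_tendsto' (((hh _).tendsto φ).comp hφ) fun n =>
      hψ3 (q n) _ hL (le_ciSup (f := fun n => l (q n)) Ordinal.bddAbove_of_small n)
  rw [h3] at h4
  exact absurd (hsmall _ hL) (not_lt.2 h4)

end Skeleton

/-! ### Chains of functionals -/

section Chain

variable {X : Type u} [NormedAddCommGroup X] [NormedSpace ℝ X]

/-- Translating the embedded copy of `[0, ω₁]` so that its last point becomes `0`, and extending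
by `0` to all ordinals. -/
lemma exists_chain
    (hemb : ∃ f : OrdinalSegmentOmega1 → ↥(dualBall X), Topology.IsEmbedding f) :
    ∃ Y : Ordinal.{0} → WeakDual ℝ X, Continuous Y ∧ (∀ α < omega1, Y α ≠ 0) ∧
      (∀ α, omega1 ≤ α → Y α = 0) ∧ ∀ α x, |Y α x| ≤ 2 * ‖x‖ := by
  obtain ⟨f, hf⟩ := hemb
  refine ⟨fun α => (f ⟨min α omega1, Set.mem_Iic.2 (min_le_right _ _)⟩).1 -
    (f ⟨omega1, Set.mem_Iic.2 le_rfl⟩).1, ?_, ?_, ?_, ?_⟩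
  · refine Continuous.sub (continuous_subtype_val.comp (hf.continuous.comp ?_)) continuous_const
    exact (continuous_id.min continuous_const).subtype_mk _
  · intro α hα h
    have h1 := hf.injective (Subtype.ext (sub_eq_zero.1 h))
    have h2 := congrArg Subtype.val h1
    simp only [min_eq_left hα.le] at h2
    exact hα.ne h2
  · intro α hα
    simp only [min_eq_right hα, sub_self]
  · intro α x
    have h1 := (f ⟨min α omega1, Set.mem_Iic.2 (min_le_right _ _)⟩).2 x
    have h2 := (f ⟨omega1, Set.mem_Iic.2 le_rfl⟩).2 x
    exact (abs_sub _ _).trans ((add_le_add h1 h2).trans_eq (two_mul _).symm)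

lemma exists_vanish (Y : Ordinal.{0} → WeakDual ℝ X) (hY : Continuous Y)
    (h0 : ∀ α, omega1 ≤ α → Y α = 0) (x : X) : ∃ β < omega1, ∀ α, β ≤ α → Y α x = 0 := by
  obtain ⟨β, hβ, h⟩ := eventually_const (fun α => Y α x)
    ((WeakDual.eval_continuous x).comp hY).continuousAt
  refine ⟨β, hβ, fun α hα => ?_⟩
  rcases le_total α omega1 with h1 | h1
  · rw [h α hα h1, h0 _ le_rfl]
    rfl
  · rw [h0 α h1]
    rfl

/-- After discarding an initial segment, the functionals `Y α`, `α ≤ l`, are uniformly positive at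
a common vector, whose norm is bounded independently of `l`. -/
lemma exists_positive (Y : Ordinal.{0} → WeakDual ℝ X) (hY : Continuous Y)
    (hne : ∀ α < omega1, Y α ≠ 0) :
    ∃ ζ < omega1, ∃ n : ℕ, ∀ l < omega1, ∃ x : X, ‖x‖ ≤ n ∧
      ∀ α, ζ < α → α ≤ l → 1 / 2 ≤ Y α x := by
  refine pressing_down (fun ζ n l => ∃ x : X, ‖x‖ ≤ n ∧ ∀ α, ζ < α → α ≤ l → 1 / 2 ≤ Y α x) ?_ ?_
  · rintro ζ ζ' n n' l l' h1 h2 h3 ⟨x, hx, h⟩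
    exact ⟨x, hx.trans (by exact_mod_cast h2), fun α h4 h5 => h α (h1.trans_lt h4) (h5.trans h3)⟩
  · intro l hl0 hl
    obtain ⟨v, hv⟩ : ∃ v, Y l v ≠ 0 := by
      by_contra! h
      exact hne l hl (DFunLike.ext _ _ h)
    have hx : Y l ((Y l v)⁻¹ • v) = 1 := by
      rw [map_smul, smul_eq_mul, inv_mul_cancel₀ hv]
    set x := (Y l v)⁻¹ • v
    have hcont : Continuous fun α => Y α x := (WeakDual.eval_continuous x).comp hY
    have hnhds : {α | 1 / 2 < Y α x} ∈ 𝓝 l :=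
      (isOpen_lt continuous_const hcont).mem_nhds (by
        change 1 / 2 < Y l x
        rw [hx]; norm_num)
    obtain ⟨ζ, hζ, hsub⟩ := exists_Ioc_subset_of_mem_nhds hnhds ⟨0, hl0⟩
    obtain ⟨n, hn⟩ := exists_nat_ge ‖x‖
    exact ⟨ζ, hζ, n, x, hn, fun α h1 h2 => le_of_lt (hsub ⟨h1, h2⟩)⟩

end Chain

/-! ### The renorming -/

/-- The data from which the new norm is built: functionals `a`, `b` biorthogonal to `x₀`, `x₁`, and
a continuous chain `y` of functionals, vanishing at `x₀`, `x₁` and from `ω₁` on, which is positive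
in the sense that the `y α`, `α ≤ l`, are bounded below by `1 / 2` at `w l`. The number `M` bounds
the distortion of the norm. -/
structure RenormingData (X : Type u) [NormedAddCommGroup X] [NormedSpace ℝ X] (M : ℝ) where
  a : WeakDual ℝ X
  b : WeakDual ℝ X
  x₀ : X
  x₁ : X
  y : Ordinal.{0} → WeakDual ℝ X
  w : Ordinal.{0} → X
  C : ℝ
  one_le : 1 ≤ M
  y_cont : Continuous y
  y_zero : ∀ α, omega1 ≤ α → y α = 0
  a_x₀ : a x₀ = 1
  a_x₁ : a x₁ = 0
  b_x₀ : b x₀ = 0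
  b_x₁ : b x₁ = 1
  y_x₀ : ∀ α, y α x₀ = 0
  y_x₁ : ∀ α, y α x₁ = 0
  norm_x₀ : ‖x₀‖ < 1
  C_pos : 0 < C
  y_w : ∀ l < omega1, ∀ α ≤ l, 1 / 2 ≤ y α (w l)
  y_w_le : ∀ l α, |y α (w l)| ≤ C
  bound_b : ∀ x, |a x| + |b x| ≤ M * ‖x‖
  bound_y : ∀ α x, |a x| + |y α x| ≤ M * ‖x‖

lemma exists_renormingData {X : Type u} [NormedAddCommGroup X] [NormedSpace ℝ X]
    (hemb : ∃ f : OrdinalSegmentOmega1 → ↥(dualBall X), Topology.IsEmbedding f)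
    (M : ℝ) (hM : 1 < M) : Nonempty (RenormingData X M) := by
  obtain ⟨Y, hYc, hYne, hY0, hYb⟩ := exists_chain hemb
  -- The functional `a` has norm `A > 1`, the chain has norm at most `2 * σ`, and `A + 2 * σ = M`.
  set A := (1 + M) / 2 with hA
  set σ := (M - 1) / 4 with hσ
  have hA1 : 1 < A := by rw [hA]; linarith
  have hσ0 : 0 < σ := by rw [hσ]; linarith
  have hAσ : A + 2 * σ = M := by rw [hA, hσ]; ring
  set Z : Ordinal.{0} → WeakDual ℝ X := fun α => σ • Y α with hZ
  have hZa : ∀ α x, Z α x = σ * Y α x := fun α x => rfl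
  have hZc : Continuous Z := hYc.const_smul σ
  have hZne : ∀ α < omega1, Z α ≠ 0 := fun α hα => smul_ne_zero hσ0.ne' (hYne α hα)
  have hZ0 : ∀ α, omega1 ≤ α → Z α = 0 := fun α hα => by simp [hZ, hY0 α hα]
  have hZb : ∀ α x, |Z α x| ≤ 2 * σ * ‖x‖ := fun α x => by
    rw [hZa, abs_mul, abs_of_pos hσ0]
    nlinarith [hYb α x]
  have exists_ne : ∀ φ : WeakDual ℝ X, φ ≠ 0 → ∃ v, φ v ≠ 0 := fun φ hφ => by
    by_contra! h
    exact hφ (DFunLike.ext _ _ h)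
  obtain ⟨v, hv⟩ := exists_ne _ (hZne 0 omega1_pos)
  have hv0 : 0 < ‖v‖ := norm_pos_iff.2 fun h => hv (by rw [h, map_zero])
  obtain ⟨g, hg1, hgv⟩ := exists_dual_vector ℝ v hv0.ne'
  set a : WeakDual ℝ X := A • StrongDual.toWeakDual g with ha
  have haa : ∀ x, a x = A * g x := fun x => rfl
  have hab : ∀ x, |a x| ≤ A * ‖x‖ := fun x => by
    rw [haa, abs_mul, abs_of_pos (by linarith : 0 < A)]
    have := g.le_opNorm x
    rw [hg1, one_mul, Real.norm_eq_abs] at this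
    exact mul_le_mul_of_nonneg_left this (by linarith)
  set x₀ : X := (A * ‖v‖)⁻¹ • v with hx₀
  have hax₀ : a x₀ = 1 := by
    rw [haa, hx₀, map_smul, hgv, smul_eq_mul]
    simp only [RCLike.ofReal_real_eq_id, id]
    field_simp
  have hnx₀ : ‖x₀‖ < 1 := by
    rw [hx₀, norm_smul, norm_inv, norm_mul, norm_norm, Real.norm_eq_abs, abs_of_pos (by linarith),
      mul_inv, mul_assoc, inv_mul_cancel₀ hv0.ne', mul_one]
    exact inv_lt_one_of_one_lt₀ hA1
  obtain ⟨β, hβ, hβ0⟩ := exists_vanish Z hZc hZ0 x₀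
  obtain ⟨v₁, hv₁⟩ := exists_ne _ (hZne β hβ)
  set b := Z β with hb
  have hbx₀ : b x₀ = 0 := hβ0 β le_rfl
  set x₁ : X := (b v₁)⁻¹ • (v₁ - a v₁ • x₀) with hx₁
  have hax₁ : a x₁ = 0 := by
    rw [hx₁, map_smul, map_sub, map_smul, hax₀]; simp
  have hbx₁ : b x₁ = 1 := by
    rw [hx₁, map_smul, map_sub, map_smul, hbx₀]; simp [hv₁]
  obtain ⟨ζ₁, hζ₁, hζ₁0⟩ := exists_vanish Z hZc hZ0 x₁
  obtain ⟨ζ, hζ, n, hpos⟩ := exists_positive Z hZc hZne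
  -- The part of the chain from `θ` on vanishes at `x₀` and `x₁` and is uniformly positive.
  set θ := max (max β ζ₁) (Order.succ ζ) with hθ
  have hθ1 : θ < omega1 := max_lt (max_lt hβ hζ₁) (succ_lt_omega1 hζ)
  have hw : ∀ l, ∃ x : X, ‖x‖ ≤ n ∧
      (l < omega1 → ∀ α, ζ < α → α ≤ max l θ → 1 / 2 ≤ Z α x) := fun l => by
    by_cases hl : l < omega1
    · obtain ⟨x, h1, h2⟩ := hpos (max l θ) (max_lt hl hθ1)
      exact ⟨x, h1, fun _ => h2⟩
    · exact ⟨0, by simp, fun h => absurd h hl⟩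
  choose w hwn hw using hw
  refine ⟨{
    a := a, b := b, x₀ := x₀, x₁ := x₁, y := fun α => Z (max α θ), w := w, C := 2 * σ * n + 1
    one_le := hM.le
    y_cont := hZc.comp (continuous_id.max continuous_const)
    y_zero := fun α hα => hZ0 _ (hα.trans (le_max_left _ _))
    a_x₀ := hax₀, a_x₁ := hax₁, b_x₀ := hbx₀, b_x₁ := hbx₁
    y_x₀ := fun α => hβ0 _ (((le_max_left _ _).trans (le_max_left _ _)).trans (le_max_right _ _))
    y_x₁ := fun α => hζ₁0 _ (((le_max_right _ _).trans (le_max_left _ _)).trans (le_max_right _ _))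
    norm_x₀ := hnx₀
    C_pos := by positivity
    y_w := fun l hl α hα => hw l hl _
      ((Order.lt_succ ζ).trans_le ((le_max_right _ _).trans (le_max_right _ _)))
      (max_le_max hα le_rfl)
    y_w_le := fun l α => (hZb _ _).trans (by nlinarith [hwn l])
    bound_b := fun x => by
      rw [← hAσ, add_mul]
      exact add_le_add (hab x) (hZb _ x)
    bound_y := fun α x => by
      rw [← hAσ, add_mul]
      exact add_le_add (hab x) (hZb _ x) }⟩

section Renorming

variable {X : Type u} [NormedAddCommGroup X] [NormedSpace ℝ X] {M : ℝ}

namespace RenormingData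

/-- The generators of the new dual ball: the old dual ball, a circle in the plane spanned by
`a` and `b`, and the translated chain `a + y α`. -/
def gen (c : RenormingData X M) : Set (WeakDual ℝ X) :=
  {φ | φ ∈ dualBall X ∨ (∃ s t : ℝ, s ^ 2 + t ^ 2 = 1 ∧ φ = s • c.a + t • c.b) ∨
    ∃ α, φ = c.a + c.y α}

/-- The new norm: the supremum over the generators, so that its dual ball is the weak* closed
absolutely convex hull of `gen`. -/
noncomputable def N (c : RenormingData X M) (x : X) : ℝ := ⨆ φ : c.gen, |φ.1 x|

variable (c : RenormingData X M)

lemma gen_bound {φ : WeakDual ℝ X} (hφ : φ ∈ c.gen) (x : X) : |φ x| ≤ M * ‖x‖ := by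
  rcases hφ with h | ⟨s, t, hst, rfl⟩ | ⟨α, rfl⟩
  · exact (h x).trans (le_mul_of_one_le_left (norm_nonneg x) c.one_le)
  · have hs : |s| ≤ 1 := abs_le_one_iff_mul_self_le_one.2 (by nlinarith [sq_nonneg t])
    have ht : |t| ≤ 1 := abs_le_one_iff_mul_self_le_one.2 (by nlinarith [sq_nonneg s])
    refine le_trans ?_ (c.bound_b x)
    refine (abs_add_le (s * c.a x) (t * c.b x)).trans ?_
    rw [abs_mul, abs_mul]
    exact add_le_add (mul_le_of_le_one_left (abs_nonneg _) hs)
      (mul_le_of_le_one_left (abs_nonneg _) ht)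
  · exact (abs_add_le (c.a x) (c.y α x)).trans (c.bound_y α x)

lemma zero_mem_gen : (0 : WeakDual ℝ X) ∈ c.gen := Or.inl fun x => by
  rw [show (0 : WeakDual ℝ X) x = 0 from rfl, abs_zero]
  exact norm_nonneg x

instance : Nonempty c.gen := ⟨⟨0, c.zero_mem_gen⟩⟩

lemma le_N {φ : WeakDual ℝ X} (hφ : φ ∈ c.gen) (x : X) : |φ x| ≤ c.N x :=
  le_ciSup (f := fun φ : c.gen => |φ.1 x|)
    ⟨M * ‖x‖, by rintro _ ⟨φ, rfl⟩; exact c.gen_bound φ.2 x⟩ ⟨φ, hφ⟩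

lemma N_le_of_forall {x : X} {m : ℝ} (h : ∀ φ ∈ c.gen, |φ x| ≤ m) : c.N x ≤ m :=
  ciSup_le fun φ => h φ.1 φ.2

lemma N_le (x : X) : c.N x ≤ M * ‖x‖ := c.N_le_of_forall fun _ hφ => c.gen_bound hφ x

lemma norm_le_N (x : X) : ‖x‖ ≤ c.N x := by
  obtain ⟨g, hg, hgx⟩ := exists_dual_vector'' ℝ x
  have h1 : StrongDual.toWeakDual g ∈ c.gen := Or.inl fun z => by
    have := g.le_opNorm z
    exact this.trans (mul_le_of_le_one_left (norm_nonneg z) hg)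
  have h2 := c.le_N h1 x
  rw [show (StrongDual.toWeakDual g) x = g x from rfl, hgx] at h2
  exact (le_abs_self _).trans h2

lemma isEquivNorm : IsEquivNorm c.N := by
  refine ⟨fun r x => ?_, fun x z => ?_, 1, M, one_pos, fun x => ⟨?_, c.N_le x⟩⟩
  · simp only [N, map_smul, smul_eq_mul, abs_mul]
    exact (Real.mul_iSup_of_nonneg (abs_nonneg r) _).symm
  · refine c.N_le_of_forall fun φ hφ => ?_
    rw [map_add]
    exact (abs_add_le _ _).trans (add_le_add (c.le_N hφ x) (c.le_N hφ z))
  · rw [one_mul]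
    exact c.norm_le_N x

lemma mem_dualBall_of_gen {φ : WeakDual ℝ X} (hφ : φ ∈ c.gen) : φ ∈ dualBallWrt c.N :=
  fun x => c.le_N hφ x

lemma compactSpace : CompactSpace (dualBallWrt c.N) := by
  rw [← isCompact_iff_compactSpace]
  have hM : 0 ≤ M := zero_le_one.trans c.one_le
  refine (WeakDual.isCompact_closedBall (𝕜 := ℝ) (E := X) 0 M).of_isClosed_subset ?_ ?_
  · have : dualBallWrt c.N = ⋂ x : X, {φ : WeakDual ℝ X | |φ x| ≤ c.N x} := by
      ext φ; simp [dualBallWrt]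
    rw [this]
    exact isClosed_iInter fun x =>
      isClosed_le (WeakDual.eval_continuous x).abs continuous_const
  · intro φ hφ
    simp only [Set.mem_preimage, mem_closedBall_zero_iff]
    exact ContinuousLinearMap.opNorm_le_bound _ hM fun x => (hφ x).trans (c.N_le x)

/-- An upper bound for the dual ball at `x`, checked on the three families of generators. -/
lemma apply_le {φ : WeakDual ℝ X} (hφ : φ ∈ dualBallWrt c.N) {x : X} {m : ℝ} (hm : 0 ≤ m)
    (h1 : ‖x‖ ≤ m) (h2 : c.a x ^ 2 + c.b x ^ 2 ≤ m ^ 2) (h3 : ∀ α, |c.a x + c.y α x| ≤ m) :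
    φ x ≤ m := by
  refine (le_abs_self _).trans ((hφ x).trans (c.N_le_of_forall fun ψ hψ => ?_))
  rcases hψ with h | ⟨s, t, hst, rfl⟩ | ⟨α, rfl⟩
  · exact (h x).trans h1
  · change |s * c.a x + t * c.b x| ≤ m
    refine abs_le_of_sq_le_sq ?_ hm
    nlinarith [sq_nonneg (s * c.b x - t * c.a x)]
  · exact h3 α

lemma eventually_mul_lt (q r : ℝ) (hr : 0 < r) : ∀ᶠ τ in 𝓝[>] (0 : ℝ), τ * q < r := by
  have : Tendsto (fun τ : ℝ => τ * q) (𝓝[>] 0) (𝓝 (0 * q)) :=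
    ((continuous_id.mul continuous_const).tendsto 0).mono_left nhdsWithin_le_nhds
  rw [zero_mul] at this
  exact this.eventually_lt_const hr

lemma abs_y_le (α : Ordinal.{0}) (x : X) : |c.y α x| ≤ M * ‖x‖ :=
  (le_add_of_nonneg_left (abs_nonneg _)).trans (c.bound_y α x)

lemma abs_a_le (x : X) : |c.a x| ≤ M * ‖x‖ :=
  (le_add_of_nonneg_right (abs_nonneg _)).trans (c.bound_b x)

/-- The norm is Gateaux smooth at `s • x₀ + t • x₁`, where near this point it is given by
the circle, so this vector exposes the point `s • a + t • b` of the dual ball. -/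
lemma exposed {s t : ℝ} (hst : s ^ 2 + t ^ 2 = 1) (hs : |s| < 1)
    (hz : ‖s • c.x₀ + t • c.x₁‖ < 1) {φ : WeakDual ℝ X} (hφ : φ ∈ dualBallWrt c.N)
    (h1 : φ (s • c.x₀ + t • c.x₁) = 1) : φ = s • c.a + t • c.b := by
  set z := s • c.x₀ + t • c.x₁ with hz_def
  have haz : c.a z = s := by simp [hz_def, c.a_x₀, c.a_x₁]
  have hbz : c.b z = t := by simp [hz_def, c.b_x₀, c.b_x₁]
  have hyz : ∀ α, c.y α z = 0 := fun α => by simp [hz_def, c.y_x₀, c.y_x₁]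
  have key : ∀ v, φ v ≤ s * c.a v + t * c.b v := by
    intro v
    by_contra! hlt
    set L := s * c.a v + t * c.b v with hL
    obtain ⟨d, hd, hdL⟩ : ∃ d, 0 < d ∧ φ v = L + d := ⟨φ v - L, by linarith, by ring⟩
    have e1 := eventually_mul_lt (-(L + d / 2)) 1 one_pos
    have e2 := eventually_mul_lt (‖v‖ - (L + d / 2)) (1 - ‖z‖) (by linarith)
    have e3 := eventually_mul_lt (2 * (M * ‖v‖) - (L + d / 2)) (1 - |s|) (by linarith)
    have e4 := eventually_mul_lt (c.a v ^ 2 + c.b v ^ 2) d hd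
    have e5 : ∀ᶠ τ in 𝓝[>] (0 : ℝ), 0 < τ := self_mem_nhdsWithin
    obtain ⟨τ, h1', h2, h3, h4, hτ⟩ := (e1.and (e2.and (e3.and (e4.and e5)))).exists
    have hcon : φ (z + τ • v) ≤ 1 + τ * (L + d / 2) := by
      refine c.apply_le hφ (by linarith) ?_ ?_ fun α => ?_
      · refine (norm_add_le _ _).trans ?_
        rw [norm_smul, Real.norm_eq_abs, abs_of_pos hτ]
        linarith
      · simp only [map_add, map_smul, smul_eq_mul, haz, hbz]
        have : τ * (τ * (c.a v ^ 2 + c.b v ^ 2)) ≤ τ * d :=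
          mul_le_mul_of_nonneg_left h4.le hτ.le
        nlinarith [sq_nonneg (τ * (L + d / 2))]
      · simp only [map_add, map_smul, smul_eq_mul, haz, hyz]
        have e : s + τ * c.a v + (0 + τ * c.y α v) = s + τ * (c.a v + c.y α v) := by ring
        rw [e]
        refine (abs_add_le _ _).trans ?_
        rw [abs_mul, abs_of_pos hτ]
        have h5 : |c.a v + c.y α v| ≤ 2 * (M * ‖v‖) :=
          (abs_add_le _ _).trans (by linarith [c.abs_a_le v, c.abs_y_le α v])
        nlinarith
    rw [map_add, map_smul, smul_eq_mul, h1, hdL] at hcon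
    nlinarith
  refine DFunLike.ext _ _ fun v => le_antisymm (key v) ?_
  have := key (-v)
  simp only [map_neg] at this
  change s * c.a v + t * c.b v ≤ φ v
  linarith

/-- The face of the dual ball exposed by `x₀` is contained in the closed convex hull of the points
`a + y α`, expressed through support functions. -/
lemma face_le {φ : WeakDual ℝ X} (hφ : φ ∈ dualBallWrt c.N) (h1 : φ c.x₀ = 1) (v : X) (m : ℝ)
    (hm : ∀ α, c.y α v ≤ m) : φ v - c.a v ≤ m := by
  by_contra! hlt
  have hm0 : 0 ≤ m := by
    have := hm omega1
    rwa [c.y_zero _ le_rfl] at this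
  obtain ⟨d, hd, hdL⟩ : ∃ d, 0 < d ∧ φ v = c.a v + m + d :=
    ⟨φ v - c.a v - m, by linarith, by ring⟩
  obtain ⟨k, hk⟩ : ∃ k, k = m + d / 2 := ⟨_, rfl⟩
  have e1 := eventually_mul_lt (3 * (M * ‖v‖)) (1 / 2) one_half_pos
  have e2 := eventually_mul_lt (‖v‖ - (c.a v + k)) (1 - ‖c.x₀‖) (by linarith [c.norm_x₀])
  have e4 := eventually_mul_lt (c.b v ^ 2) k (by linarith)
  have e5 : ∀ᶠ τ in 𝓝[>] (0 : ℝ), 0 < τ := self_mem_nhdsWithin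
  obtain ⟨τ, h1', h2, h4, hτ⟩ := (e1.and (e2.and (e4.and e5))).exists
  have hMv : 0 ≤ M * ‖v‖ := (abs_nonneg _).trans (c.abs_a_le v)
  have ha := abs_le.1 (c.abs_a_le v)
  have hta : - (1 / 2) ≤ τ * c.a v := by nlinarith
  have hτk : 0 < τ * k := mul_pos hτ (by linarith)
  have hcon : φ (c.x₀ + τ • v) ≤ 1 + τ * (c.a v + k) := by
    refine c.apply_le hφ (by linarith) ?_ ?_ fun α => ?_
    · refine (norm_add_le _ _).trans ?_
      rw [norm_smul, Real.norm_eq_abs, abs_of_pos hτ]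
      linarith
    · simp only [map_add, map_smul, smul_eq_mul, c.a_x₀, c.b_x₀]
      have h5 : τ * (τ * c.b v ^ 2) ≤ τ * k := mul_le_mul_of_nonneg_left h4.le hτ.le
      have h6 : (τ * k) * (- (1 / 2)) ≤ (τ * k) * (τ * c.a v) :=
        mul_le_mul_of_nonneg_left hta hτk.le
      nlinarith [sq_nonneg (τ * k)]
    · simp only [map_add, map_smul, smul_eq_mul, c.a_x₀, c.y_x₀]
      have hy := abs_le.1 (c.abs_y_le α v)
      have h7 : - (1 / 2) ≤ τ * (2 * c.a v + c.y α v) := by nlinarith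
      have h8 : τ * c.y α v ≤ τ * m := mul_le_mul_of_nonneg_left (hm α) hτ.le
      rw [abs_le]
      constructor <;> nlinarith
  rw [map_add, map_smul, smul_eq_mul, h1, hdL, hk] at hcon
  nlinarith

end RenormingData

end Renorming

/-! ### Finitely additive means on the face -/

/-- The space of bounded real functions on a set. -/
def boundedFun (ι : Type*) : Submodule ℝ (ι → ℝ) where
  carrier := {g | ∃ C, ∀ i, |g i| ≤ C}
  zero_mem' := ⟨0, fun i => by simp⟩
  add_mem' := by
    rintro f g ⟨C, hC⟩ ⟨D, hD⟩
    exact ⟨C + D, fun i => (abs_add_le _ _).trans (add_le_add (hC i) (hD i))⟩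
  smul_mem' := by
    rintro r g ⟨C, hC⟩
    refine ⟨|r| * C, fun i => ?_⟩
    rw [Pi.smul_apply, smul_eq_mul, abs_mul]
    exact mul_le_mul_of_nonneg_left (hC i) (abs_nonneg r)

/-- If `ψ v ≤ sup (T v)` for a linear map `T` into bounded functions, then `ψ` is the composition
of `T` with a mean (a finitely additive probability measure). The Hahn–Banach extension takes place
in `V × boundedFun ι`, which makes it unnecessary to factor `ψ` through the range of `T`. -/
lemma exists_mean {ι : Type*} [Nonempty ι] {V : Type*} [AddCommGroup V] [Module ℝ V]
    (T : V →ₗ[ℝ] boundedFun ι) (ψ : V →ₗ[ℝ] ℝ)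
    (hψ : ∀ v m, (∀ i, (T v).1 i ≤ m) → ψ v ≤ m) :
    ∃ Λ : boundedFun ι →ₗ[ℝ] ℝ, (∀ g m, (∀ i, g.1 i ≤ m) → Λ g ≤ m) ∧ ∀ v, Λ (T v) = ψ v := by
  let Q : V × boundedFun ι → boundedFun ι := fun p => T p.1 + p.2
  have hQadd : ∀ p q, Q (p + q) = Q p + Q q := fun p q => by
    simp only [Q, Prod.fst_add, Prod.snd_add, map_add]; abel
  have hQsmul : ∀ (r : ℝ) p, Q (r • p) = r • Q p := fun r p => by simp [Q]
  have hbdd : ∀ g : boundedFun ι, BddAbove (Set.range g.1) := by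
    rintro ⟨g, C, hC⟩
    exact ⟨C, by rintro _ ⟨i, rfl⟩; exact (abs_le.1 (hC i)).2⟩
  let F : (V × boundedFun ι) →ₗ.[ℝ] ℝ :=
    { domain := Submodule.prod ⊤ ⊥
      toFun := ψ.comp ((LinearMap.fst ℝ V (boundedFun ι)).comp (Submodule.subtype _)) }
  obtain ⟨Φ, hΦ1, hΦ2⟩ := exists_extension_of_le_sublinear F (fun p => ⨆ i, (Q p).1 i)
    (fun r hr p => by
      simp only [hQsmul]
      exact (Real.mul_iSup_of_nonneg hr.le _).symm)
    (fun p q => by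
      rw [hQadd]
      exact ciSup_le fun i => add_le_add (le_ciSup (hbdd (Q p)) i) (le_ciSup (hbdd (Q q)) i))
    (by
      rintro ⟨⟨v, g⟩, hvg⟩
      obtain rfl : g = 0 := (Submodule.mem_bot ℝ).1 hvg.2
      refine hψ v _ fun i => ?_
      have := le_ciSup (hbdd (Q (v, 0))) i
      simpa [Q] using this)
  have hle : ∀ p m, (∀ i, (Q p).1 i ≤ m) → Φ p ≤ m := fun p m h => (hΦ2 p).trans (ciSup_le h)
  refine ⟨Φ.comp (LinearMap.inr ℝ V (boundedFun ι)), fun g m h => ?_, fun v => ?_⟩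
  · exact hle (0, g) m fun i => by simpa [Q] using h i
  · have h1 : Φ (v, -T v) ≤ 0 := hle _ 0 fun i => by simp [Q]
    have h2 : Φ (-v, T v) ≤ 0 := hle _ 0 fun i => by simp [Q]
    have h3 : Φ (v, 0) = ψ v := hΦ1 ⟨(v, 0), Submodule.mem_top, Submodule.zero_mem _⟩
    have e1 : ((v, -T v) : V × boundedFun ι) = (v, 0) - (0, T v) := by simp
    have e2 : ((-v, T v) : V × boundedFun ι) = (0, T v) - (v, 0) := by simp
    rw [e1, map_sub] at h1
    rw [e2, map_sub] at h2
    change Φ (0, T v) = ψ v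
    linarith

namespace RenormingData

variable {X : Type u} [NormedAddCommGroup X] [NormedSpace ℝ X] {M : ℝ} (c : RenormingData X M)

/-- A point of the face exposed by `x₀` that is not small at some `w α₀` is bounded away from `a`
at all `w l` with `l < ω₁` large. Indeed it is `a` plus the mean of the `y α` for a finitely
additive measure, some interval `[0, l₀]` carries a definite mass and all but a tiny part of the
mass of `[0, ω₁)`, and the `y α` with `α ≤ l₀` are positive at `w l` for `l ≥ l₀`. -/
lemma large_of_face {φ : WeakDual ℝ X} (hφ : φ ∈ dualBallWrt c.N) (h1 : φ c.x₀ = 1)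
    (α₀ : Ordinal.{0}) (h2 : 1 / 4 ≤ φ (c.w α₀) - c.a (c.w α₀)) :
    ∃ l₀ < omega1, ∀ l < omega1, l₀ ≤ l → 1 / (16 * c.C) ≤ φ (c.w l) - c.a (c.w l) := by
  have hC := c.C_pos
  let T : X →ₗ[ℝ] boundedFun Ordinal.{0} :=
    { toFun := fun v => ⟨fun α => c.y α v, M * ‖v‖, fun α => c.abs_y_le α v⟩
      map_add' := fun v v' => Subtype.ext (funext fun α => map_add _ _ _)
      map_smul' := fun r v => Subtype.ext (funext fun α => map_smul _ _ _) }
  let ψ : X →ₗ[ℝ] ℝ :=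
    { toFun := fun v => φ v - c.a v
      map_add' := fun v v' => by simp only [map_add]; ring
      map_smul' := fun r v => by simp only [map_smul, smul_eq_mul, RingHom.id_apply]; ring }
  obtain ⟨Λ, hΛ, hΛT⟩ := exists_mean T ψ fun v m h => c.face_le hφ h1 v m h
  have hΛ0 : ∀ g : boundedFun Ordinal.{0}, (∀ α, g.1 α ≤ 0) → Λ g ≤ 0 := fun g h => hΛ g 0 h
  -- indicator functions of initial segments
  let χ : Ordinal.{0} → boundedFun Ordinal.{0} := fun l =>
    ⟨fun α => if α ≤ l then 1 else 0, 1, fun α => by dsimp only; split_ifs <;> simp⟩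
  have hχ : ∀ l α, (χ l).1 α = if α ≤ l then 1 else 0 := fun l α => rfl
  have hχmono : ∀ l l', l ≤ l' → Λ (χ l) ≤ Λ (χ l') := fun l l' hl => by
    have := hΛ0 (χ l - χ l') fun α => by
      change (χ l).1 α - (χ l').1 α ≤ 0
      rw [hχ, hχ]
      split_ifs with h3 h4
      · simp
      · exact absurd (h3.trans hl) h4
      · simp
      · simp
    rw [map_sub] at this
    linarith
  have hvan := exists_vanish c.y c.y_cont c.y_zero
  obtain ⟨h, hh, hh0⟩ := hvan (c.w α₀)
  have hmass : 1 / (4 * c.C) ≤ Λ (χ h) := by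
    have := hΛ0 (T (c.w α₀) - c.C • χ h) fun α => by
      change c.y α (c.w α₀) - c.C * (χ h).1 α ≤ 0
      rw [hχ]
      split_ifs with h3
      · have := (abs_le.1 (c.y_w_le α₀ α)).2
        linarith
      · rw [hh0 α (not_le.1 h3).le]
        simp
    rw [map_sub, hΛT, map_smul, smul_eq_mul] at this
    have h3 : 1 / 4 ≤ c.C * Λ (χ h) := h2.trans (by
      change φ (c.w α₀) - c.a (c.w α₀) - _ ≤ 0 at this
      linarith)
    rw [div_le_iff₀ (by positivity)]
    linarith
  -- `l₁` nearly realizes the supremum of the masses of countable initial segments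
  obtain ⟨l₁, hl₁, hsup⟩ : ∃ l₁ < omega1, ∀ l < omega1,
      Λ (χ l) ≤ Λ (χ l₁) + 1 / (16 * c.C ^ 2) := by
    have hbdd : BddAbove (Set.range fun l : Set.Iio omega1 => Λ (χ l)) :=
      ⟨1, by
        rintro _ ⟨l, rfl⟩
        exact hΛ _ 1 fun α => by rw [hχ]; split_ifs <;> simp⟩
    have : Nonempty (Set.Iio omega1) := ⟨⟨0, omega1_pos⟩⟩
    obtain ⟨l₁, hl₁⟩ := exists_lt_of_lt_ciSup (show
      (⨆ l : Set.Iio omega1, Λ (χ l)) - 1 / (16 * c.C ^ 2) < ⨆ l : Set.Iio omega1, Λ (χ l) from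
        sub_lt_self _ (by positivity))
    refine ⟨l₁, l₁.2, fun l hl => ?_⟩
    have := le_ciSup hbdd ⟨l, hl⟩
    linarith
  refine ⟨max h l₁, max_lt hh hl₁, fun l hl hle => ?_⟩
  set l₀ := max h l₁
  obtain ⟨k, hk, hk0⟩ := hvan (c.w l)
  have hp := hΛ0 ((1 / 2 : ℝ) • χ l₀ - c.C • (χ (max l k) - χ l₀) - T (c.w l)) fun α => by
    change 1 / 2 * (χ l₀).1 α - c.C * ((χ (max l k)).1 α - (χ l₀).1 α) - c.y α (c.w l) ≤ 0
    rw [hχ, hχ]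
    have hy := (abs_le.1 (c.y_w_le l α)).1
    by_cases h3 : α ≤ l₀
    · rw [if_pos h3, if_pos ((h3.trans hle).trans (le_max_left _ _))]
      linarith [c.y_w l hl α (h3.trans hle)]
    · rw [if_neg h3]
      by_cases h4 : α ≤ max l k
      · rw [if_pos h4]
        linarith
      · rw [if_neg h4, hk0 α ((le_max_right _ _).trans (not_le.1 h4).le)]
        simp
  rw [map_sub, map_sub, map_smul, map_smul, map_sub, hΛT, smul_eq_mul, smul_eq_mul] at hp
  change _ - (φ (c.w l) - c.a (c.w l)) ≤ 0 at hp
  have h5 : Λ (χ (max l k)) - Λ (χ l₀) ≤ 1 / (16 * c.C ^ 2) := by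
    linarith [hsup (max l k) (max_lt hl hk), hχmono l₁ l₀ (le_max_right _ _)]
  have h6 : c.C * (Λ (χ (max l k)) - Λ (χ l₀)) ≤ 1 / (16 * c.C) := by
    refine (mul_le_mul_of_nonneg_left h5 hC.le).trans_eq ?_
    field_simp
  have h7 : 1 / (4 * c.C) ≤ Λ (χ l₀) := hmass.trans (hχmono h l₀ (le_max_left _ _))
  have h8 : 1 / (4 * c.C) = 4 * (1 / (16 * c.C)) := by field_simp; norm_num
  linarith

/-- Points of the circle close to `a` are exposed, so `a` is fixed by some retraction; the chain
`a + y α` converging to `a` then contradicts `RetractionalSkeleton.false_of_chain`, with the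
functions `φ ↦ φ x₀` (which cuts out the face) and `φ ↦ φ (w l) - a (w l)`. -/
lemma not_hasRetractionalSkeleton : ¬ HasRetractionalSkeleton (dualBallWrt c.N) := by
  rintro ⟨S⟩
  have := c.compactSpace
  have hval : ∀ x : X, Continuous fun φ : dualBallWrt c.N => φ.1 x := fun x =>
    (WeakDual.eval_continuous x).comp continuous_subtype_val
  let e : Ordinal.{0} → dualBallWrt c.N := fun α =>
    ⟨c.a + c.y α, c.mem_dualBall_of_gen (Or.inr (Or.inr ⟨α, rfl⟩))⟩
  have he : Continuous e := (continuous_const.add c.y_cont).subtype_mk _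
  have heα : ∀ α x, (e α).1 x = c.a x + c.y α x := fun α x => rfl
  have hetop : (e omega1).1 = c.a := by simp [e, c.y_zero omega1 le_rfl]
  have hne : ∀ α < omega1, e α ≠ e omega1 := fun α hα h => by
    have h1 := congrArg (fun φ => φ.1 (c.w α)) h
    simp only [hetop, heα] at h1
    have := c.y_w α hα α le_rfl
    linarith
  have hgt := S.exists_gt e he hne
  -- points of the circle converging to `a`
  have hzcont : Continuous fun θ : ℝ => ‖Real.cos θ • c.x₀ + Real.sin θ • c.x₁‖ := by fun_prop
  have hz : ∀ᶠ θ in 𝓝 (0 : ℝ), ‖Real.cos θ • c.x₀ + Real.sin θ • c.x₁‖ < 1 :=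
    (hzcont.tendsto 0).eventually_lt_const (by simpa using c.norm_x₀)
  obtain ⟨θ₀, hθ₀, hball⟩ := Metric.eventually_nhds_iff.1 hz
  let θ : ℕ → ℝ := fun n => min θ₀ 1 / 2 * (1 / ((n : ℝ) + 1))
  have hmin : 0 < min θ₀ 1 := lt_min hθ₀ one_pos
  have hθpos : ∀ n, 0 < θ n := fun n => by positivity
  have hθle : ∀ n, θ n ≤ min θ₀ 1 / 2 := fun n => by
    refine mul_le_of_le_one_right (by positivity) ?_
    rw [div_le_one (by positivity)]
    linarith [Nat.cast_nonneg (α := ℝ) n]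
  have hθlim : Tendsto θ atTop (𝓝 0) := by
    simpa [θ] using tendsto_one_div_add_atTop_nhds_zero_nat.const_mul (min θ₀ 1 / 2)
  have hnorm : ∀ n, ‖Real.cos (θ n) • c.x₀ + Real.sin (θ n) • c.x₁‖ < 1 := fun n => by
    apply hball
    rw [Real.dist_eq, sub_zero, abs_of_pos (hθpos n)]
    linarith [hθle n, min_le_left θ₀ 1]
  have hcos : ∀ n, |Real.cos (θ n)| < 1 := fun n => by
    have hsin : 0 < Real.sin (θ n) :=
      Real.sin_pos_of_pos_of_le_one (hθpos n) (by linarith [hθle n, min_le_right θ₀ 1])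
    refine (sq_lt_one_iff_abs_lt_one _).1 ?_
    nlinarith [Real.sin_sq_add_cos_sq (θ n)]
  let pt : ℝ → dualBallWrt c.N := fun t =>
    ⟨Real.cos t • c.a + Real.sin t • c.b,
      c.mem_dualBall_of_gen (Or.inr (Or.inl ⟨_, _, Real.cos_sq_add_sin_sq t, rfl⟩))⟩
  have hpt : Continuous pt :=
    ((Real.continuous_cos.smul continuous_const).add
      (Real.continuous_sin.smul continuous_const)).subtype_mk _
  have hpt0 : pt 0 = e omega1 := Subtype.ext (by simp [pt, hetop])
  have hptz : ∀ t, (pt t).1 (Real.cos t • c.x₀ + Real.sin t • c.x₁) = 1 := fun t => by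
    change Real.cos t * c.a _ + Real.sin t * c.b _ = 1
    simp only [map_add, map_smul, smul_eq_mul, c.a_x₀, c.a_x₁, c.b_x₀, c.b_x₁]
    nlinarith [Real.sin_sq_add_cos_sq t]
  obtain ⟨s₀, hs₀⟩ := S.exists_fix_limit hgt (fun n => pt (θ n))
    (fun n φ => φ.1 (Real.cos (θ n) • c.x₀ + Real.sin (θ n) • c.x₁)) (fun n => hval _)
    (fun n φ h => Subtype.ext (c.exposed (Real.cos_sq_add_sin_sq _) (hcos n) (hnorm n) φ.2
      (h.trans (hptz _)))) (e omega1) (hpt0 ▸ (hpt.tendsto 0).comp hθlim)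
  refine S.false_of_chain hgt e he s₀ hs₀ (fun φ => φ.1 c.x₀)
    (fun l φ => φ.1 (c.w l) - c.a (c.w l)) (hval _) (fun l => (hval _).sub continuous_const)
    (1 / 4) (1 / (16 * c.C)) (fun α hα => ?_) (fun φ α _ h1 h2 => ?_) (fun l _ => ?_)
  · have := c.y_w α hα α le_rfl
    simp only [heα]
    linarith
  · refine c.large_of_face φ.2 ?_ α h2
    rw [h1, heα, c.a_x₀, c.y_x₀, add_zero]
  · have := c.C_pos
    simp only [hetop, sub_self]
    positivity

end RenormingData

/-- If `[0, ω₁]` embeds homeomorphically into `(B_{X*}, w*)`, then for every `ε ∈ (0, 1)`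
there is an equivalent norm `N` on `X` with `(1 - ε) * N ≤ ‖·‖ ≤ N` whose dual unit ball,
with the weak* topology, has no retractional skeleton. -/
theorem exists_equivalent_norm_dualBall_without_retractionalSkeleton (X : Type u)
    [NormedAddCommGroup X] [NormedSpace ℝ X] [CompleteSpace X]
    (hemb : ∃ f : OrdinalSegmentOmega1 → ↥(dualBall X), Topology.IsEmbedding f)
    (ε : ℝ) (hε : ε ∈ Set.Ioo (0 : ℝ) 1) :
    ∃ N : X → ℝ, IsEquivNorm N ∧
      (∀ x : X, (1 - ε) * N x ≤ ‖x‖ ∧ ‖x‖ ≤ N x) ∧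
      ¬ HasRetractionalSkeleton ↥(dualBallWrt N) := by
  have h0 : 0 < 1 - ε := sub_pos.2 hε.2
  obtain ⟨c⟩ := exists_renormingData hemb (1 - ε)⁻¹
    (one_lt_inv_iff₀.2 ⟨h0, by linarith [hε.1]⟩)
  refine ⟨c.N, c.isEquivNorm, fun x => ⟨?_, c.norm_le_N x⟩, c.not_hasRetractionalSkeleton⟩
  have := mul_le_mul_of_nonneg_left (c.N_le x) h0.le
  rwa [mul_inv_cancel_left₀ h0.ne'] at this
end
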